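/- Let n, k be positive integers with n ≥ k, let S be a Haar-distributed random matrix from the compact symplectic group Sp(2n), let I'_{nn} = diag(I_n, −I_n), and set W̃ = (w̃_{ij}) = Sᵀ J I'_{nn} S, which encodes the random matrix W = (J Sᵀ Jᵀ) I'_{nn} S associated with the symmetric space Sp(2n)/U(n) via w̃_{ij} = (J W)_{ij}. If k is even, then for any sequence i = (i_1,…,i_{2k}) in {1,…,2n}, E[ w̃_{i_1 i_2} w̃_{i_3 i_4} ⋯ w̃_{i_{2k−1} i_{2k}} ] = Σ_{σ ∈ M_{2k}} Δ'_σ(i) Wg^{CI}(σ; n), where Wg^{CI}(·; n) := T^{CI}_n ⋆ Wg^Sp(·; n) and T^{CI}_n(σ) = Σ_{p_1,…,p_{2k} ∈ {1,…,2n}} Δ'_σ(p) Π_{r=1}^k (J I'_{nn})_{p_{2r−1}, p_{2r}}. If k is odd, then E[ w̃_{i_1 i_2} ⋯ w̃_{i_{2k−1} i_{2k}} ] = 0 for every sequence i. -/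

import Mathlib

/-!
Write `mom p i = E[S_{p_1 i_1} ⋯ S_{p_{2k} i_{2k}}]`. Expanding `W̃ = Sᵀ J I' S` gives
`E[∏ w̃] = ∑_p (∏_r (J I')_{p_{2r-1} p_{2r}}) mom p i`, so the even case is the Weingarten formula
`mom p i = ∑_{τ, ρ ∈ M_{2k}} Wg^{Sp}(τ⁻¹ ρ) Δ'_τ(p) Δ'_ρ(i)` (`mom_eq`) contracted with
`(J I')^{⊗ k}`. In the odd case the integrand changes sign under the substitution `S ↦ J S`,
because `I' J = -J I'` (`integral_odd`).

The Weingarten formula has two ingredients.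

* *The moments, as a tensor in `p`, lie in the span of the `Δ'_σ`* (`mom_mem_invSpan`), by
  induction on `k ≤ n`. Differentiating the invariance of the law along `exp (t X)` and
  complexifying shows that the tensor is annihilated by `sp(2n, ℂ)` (`infAct_eq_zero`). Summing
  this over a spanning family of `sp(2n, ℂ)`, with one tensor leg singled out, gives a Casimir
  identity: `(2n + 1) v + ∑_j (swap of legs 0 and j) v` is a combination of `J`-contractions
  of `v` (`casimir`), which for the moments are moments of order `2k - 2` since `Sᵀ J S = J`
  (`mom_rec`). There are `2k - 1 < 2n + 1` swaps, so the operator on the left is injective by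
  diagonal dominance (`casOp_injective`); it preserves the span of the `Δ'_σ`, and hence the
  moments lie in that span.

* *The Gram matrix of the `Δ'_σ` is `T^{Sp}(σ⁻¹ τ)`* (`gram_one`, `gram`). The double coset
  decomposition `S_{2k} = H_k S_k H_k` (`exists_double_coset`) reduces the pairing to the count of
  functions constant on the cycles of some `γ ∈ S_k`, and the sign of `γ` is read off from its
  number of cycles. The same computation with `J` replaced by the identity matrix identifies
  this number with `c(σ)`. Consequently `Wg^{Sp}` is the inverse Gram matrix on `M_{2k}`
  (`gram_mul_Wg`), and pairing the moments with `Δ'_ρ`, which yields `Δ'_ρ(i)`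
  (`mom_contract_Delta`), determines their coefficients.
-/

/-!
Weingarten calculus for classical compact Lie groups and compact symmetric spaces
(S. Matsumoto, "Weingarten calculus for matrix ensembles associated with compact
symmetric spaces"): common definitions.

We index `{1,…,m}` by `Fin m` (0-indexed), so the pair `{2r-1, 2r}` becomes
`{2r, 2r+1}` for `r ∈ Fin k`.
-/

open MeasureTheory Finset Matrix

namespace WgPaper

/-- `lo r` is the (0-indexed) point `2r`, i.e. `2r - 1` in 1-indexed notation. -/
def lo {k : ℕ} (i : Fin k) : Fin (2 * k) := ⟨2 * (i : ℕ), by have := i.isLt; omega⟩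

/-- `hi r` is the (0-indexed) point `2r + 1`, i.e. `2r` in 1-indexed notation. -/
def hi {k : ℕ} (i : Fin k) : Fin (2 * k) := ⟨2 * (i : ℕ) + 1, by have := i.isLt; omega⟩

/-- Number of cycles of a permutation, counting fixed points as 1-cycles. -/
def cyc {m : ℕ} (σ : Equiv.Perm (Fin m)) : ℕ :=
  Multiset.card σ.cycleType + (Finset.univ.filter fun x => σ x = x).card

/-- Number of even-length cycles of a permutation. -/
def evenCycles {m : ℕ} (σ : Equiv.Perm (Fin m)) : ℕ :=
  Multiset.card (σ.cycleType.filter fun d => d % 2 = 0)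

/-- Number of odd-length cycles of a permutation, counting fixed points as 1-cycles. -/
def oddCycles {m : ℕ} (σ : Equiv.Perm (Fin m)) : ℕ :=
  Multiset.card (σ.cycleType.filter fun d => d % 2 = 1)
    + (Finset.univ.filter fun x => σ x = x).card

/-- The sign `ε(σ)` of a permutation, as an element of a commutative ring. -/
def sgn (R : Type*) [CommRing R] {m : ℕ} (σ : Equiv.Perm (Fin m)) : R :=
  ((Equiv.Perm.sign σ : ℤ) : R)

/-- Full convolution on a finite group: `(f * g)(σ) = ∑_τ f(τ) g(τ⁻¹ σ)`. -/
def conv {G : Type*} [Group G] [Fintype G] {R : Type*} [CommRing R] (f g : G → R) : G → R :=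
  fun σ => ∑ τ : G, f τ * g (τ⁻¹ * σ)

/-- The Dirac function at the identity permutation. -/
def deltaId {m : ℕ} {R : Type*} [CommRing R] : Equiv.Perm (Fin m) → R :=
  fun σ => if σ = 1 then 1 else 0

/-- The graph `Γ(σ)` on `{1,…,2k}` whose edges are `{2r-1, 2r}` and `{σ(2r-1), σ(2r)}`
(in 1-indexed notation) for `1 ≤ r ≤ k`. -/
def Gamma {k : ℕ} (σ : Equiv.Perm (Fin (2 * k))) : SimpleGraph (Fin (2 * k)) :=
  SimpleGraph.fromRel fun a b =>
    (∃ r : Fin k, a = lo r ∧ b = hi r) ∨ ∃ r : Fin k, a = σ (lo r) ∧ b = σ (hi r)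

/-- `c(σ)`, the number of connected components of `Γ(σ)`. -/
noncomputable def ccount {k : ℕ} (σ : Equiv.Perm (Fin (2 * k))) : ℕ :=
  Nat.card (Gamma σ).ConnectedComponent

/-- The number of vertices of a connected component of a graph. -/
noncomputable def compSize {V : Type*} {G : SimpleGraph V} (C : G.ConnectedComponent) : ℕ :=
  Nat.card {v // G.connectedComponentMk v = C}

/-- `ℓe(σ)`: the number of connected components of `Γ(σ)` whose size is `≡ 0 (mod 4)`. -/
noncomputable def ecomp {k : ℕ} (σ : Equiv.Perm (Fin (2 * k))) : ℕ :=
  Nat.card {C : (Gamma σ).ConnectedComponent // compSize C % 4 = 0}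

/-- `ℓo(σ)`: the number of connected components of `Γ(σ)` whose size is `≡ 2 (mod 4)`. -/
noncomputable def ocomp {k : ℕ} (σ : Equiv.Perm (Fin (2 * k))) : ℕ :=
  Nat.card {C : (Gamma σ).ConnectedComponent // compSize C % 4 = 2}

/-- Membership in the hyperoctahedral subgroup `H_k ≤ S_{2k}`: each pair
`{2i-1, 2i}` is mapped onto some pair `{2j-1, 2j}`. -/
def IsHyper {k : ℕ} (ζ : Equiv.Perm (Fin (2 * k))) : Prop :=
  ∀ i : Fin k, ∃ j : Fin k, ({ζ (lo i), ζ (hi i)} : Finset (Fin (2 * k))) = {lo j, hi j}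

/-- The defining property of the set `M_{2k}` of coset representatives of `S_{2k}/H_k`:
`σ(2i-1) < σ(2i)` for all `i` and `σ(1) < σ(3) < ⋯ < σ(2k-1)`. -/
def MProp {k : ℕ} (σ : Equiv.Perm (Fin (2 * k))) : Prop :=
  (∀ i : Fin k, σ (lo i) < σ (hi i)) ∧ ∀ i j : Fin k, i < j → σ (lo i) < σ (lo j)

open scoped Classical in
/-- The set `M_{2k}` of coset representatives of `S_{2k}/H_k`, as a `Finset`. -/
noncomputable def Mset (k : ℕ) : Finset (Equiv.Perm (Fin (2 * k))) :=
  Finset.univ.filter MProp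

/-- Reduced convolution: `(f ⋆ g)(σ) = ∑_{τ ∈ M_{2k}} f(τ) g(τ⁻¹ σ)`. -/
noncomputable def sconv {k : ℕ} {R : Type*} [CommRing R]
    (f g : Equiv.Perm (Fin (2 * k)) → R) : Equiv.Perm (Fin (2 * k)) → R :=
  fun σ => ∑ τ ∈ Mset k, f τ * g (τ⁻¹ * σ)

open scoped Classical in
/-- The indicator function `1_k` of `H_k`. -/
noncomputable def oneH {k : ℕ} {R : Type*} [CommRing R] : Equiv.Perm (Fin (2 * k)) → R :=
  fun σ => if IsHyper σ then 1 else 0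

open scoped Classical in
/-- The twisted indicator function `1_k^ε` of `H_k`: `σ ↦ ε(σ)` on `H_k`, `0` elsewhere. -/
noncomputable def oneHeps {k : ℕ} {R : Type*} [CommRing R] : Equiv.Perm (Fin (2 * k)) → R :=
  fun σ => if IsHyper σ then sgn R σ else 0

/-- `δ_σ(i,j) = ∏_{s=1}^k δ_{i_{σ(s)}, j_s}`. -/
def deltaP {k : ℕ} {α : Type*} [DecidableEq α] {R : Type*} [CommRing R]
    (σ : Equiv.Perm (Fin k)) (i j : Fin k → α) : R :=
  ∏ s : Fin k, if i (σ s) = j s then 1 else 0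

/-- `Δ_σ(i) = ∏_{s=1}^k δ_{i_{σ(2s-1)}, i_{σ(2s)}}`. -/
def DeltaO {k : ℕ} {α : Type*} [DecidableEq α] {R : Type*} [CommRing R]
    (σ : Equiv.Perm (Fin (2 * k))) (i : Fin (2 * k) → α) : R :=
  ∏ s : Fin k, if i (σ (lo s)) = i (σ (hi s)) then 1 else 0

/-- The standard skew-symmetric matrix `J_n = ((O, I_n), (−I_n, O))`. -/
def Jmat (R : Type*) [CommRing R] (n : ℕ) : Matrix (Fin (2 * n)) (Fin (2 * n)) R :=
  Matrix.of fun p q =>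
    if (p : ℕ) + n = (q : ℕ) then 1 else if (q : ℕ) + n = (p : ℕ) then -1 else 0

/-- `Δ'_σ(i) = ∏_{r=1}^k ⟨i_{σ(2r-1)}, i_{σ(2r)}⟩`, where `⟨p,q⟩` is the `(p,q)` entry
of `J_n`. -/
def DeltaSp {k n : ℕ} (R : Type*) [CommRing R]
    (σ : Equiv.Perm (Fin (2 * k))) (i : Fin (2 * k) → Fin (2 * n)) : R :=
  ∏ s : Fin k, Jmat R n (i (σ (lo s))) (i (σ (hi s)))

/-- The signature matrix `I'_{a,n-a} = diag(I_a, −I_{n-a})`, of size `n`. -/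
def Iab (R : Type*) [CommRing R] (n a : ℕ) : Matrix (Fin n) (Fin n) R :=
  Matrix.of fun p q => if p = q then (if (p : ℕ) < a then 1 else -1) else 0

/-- The signature matrix `I''_{a,n-a} = diag(I_a, −I_{n-a}, I_a, −I_{n-a})`, of size `2n`. -/
def Ippab (R : Type*) [CommRing R] (n a : ℕ) : Matrix (Fin (2 * n)) (Fin (2 * n)) R :=
  Matrix.of fun p q => if p = q then (if (p : ℕ) % n < a then 1 else -1) else 0

/-- The unitary group `U(n)` of `n × n` complex unitary matrices. -/
abbrev UG (n : ℕ) := Matrix.unitaryGroup (Fin n) ℂ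

/-- The real orthogonal group `O(n)`. -/
abbrev OG (n : ℕ) := Matrix.orthogonalGroup (Fin n) ℝ

noncomputable instance (n : ℕ) : MeasurableSpace (UG n) := borel _

noncomputable instance (n : ℕ) : MeasurableSpace (OG n) := borel _

/-- A `2n × 2n` unitary matrix lies in the compact symplectic group `Sp(2n)`
iff `S J Sᵀ = J`. -/
def IsSymplectic {n : ℕ} (S : UG (2 * n)) : Prop :=
  (S : Matrix (Fin (2 * n)) (Fin (2 * n)) ℂ) * Jmat ℂ n
    * (S : Matrix (Fin (2 * n)) (Fin (2 * n)) ℂ)ᵀ = Jmat ℂ n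

/-- The function `T^{D III}_n` on `S_{2k}`:
`σ ↦ ∑_p Δ_σ(p) ∏_{r=1}^k J_{p_{2r-1}, p_{2r}}`. -/
noncomputable def TDIII (n k : ℕ) : Equiv.Perm (Fin (2 * k)) → ℝ :=
  fun σ => ∑ p : Fin (2 * k) → Fin (2 * n),
    DeltaO σ p * ∏ r : Fin k, Jmat ℝ n (p (lo r)) (p (hi r))

/-- The function `T^{C I}_n` on `S_{2k}`:
`σ ↦ ∑_p Δ'_σ(p) ∏_{r=1}^k (J I'_{nn})_{p_{2r-1}, p_{2r}}`. -/
noncomputable def TCI (n k : ℕ) : Equiv.Perm (Fin (2 * k)) → ℂ :=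
  fun σ => ∑ p : Fin (2 * k) → Fin (2 * n),
    DeltaSp ℂ σ p * ∏ r : Fin k, (Jmat ℂ n * Iab ℂ (2 * n) n) (p (lo r)) (p (hi r))

/-! ### Blocks and the hyperoctahedral group -/

/-- The points of `Fin (2 * k)` as pairs (index of the block, position in the block):
`(r, false)` is `lo r` and `(r, true)` is `hi r`. -/
def pairEquiv (k : ℕ) : Fin k × Bool ≃ Fin (2 * k) where
  toFun x := if x.2 then hi x.1 else lo x.1
  invFun v := (⟨(v : ℕ) / 2, by omega⟩, decide ((v : ℕ) % 2 = 1))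
  left_inv := by
    rintro ⟨r, b⟩
    cases b <;> simp [lo, hi, Fin.ext_iff]
    omega
  right_inv := by
    intro v
    by_cases h : (v : ℕ) % 2 = 1 <;> simp [lo, hi, Fin.ext_iff, h] <;> omega

@[simp] lemma pairEquiv_false {k : ℕ} (r : Fin k) : pairEquiv k (r, false) = lo r := by
  simp [pairEquiv]

@[simp] lemma pairEquiv_true {k : ℕ} (r : Fin k) : pairEquiv k (r, true) = hi r := by
  simp [pairEquiv]

@[simp] lemma pairEquiv_symm_lo {k : ℕ} (r : Fin k) : (pairEquiv k).symm (lo r) = (r, false) := by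
  rw [Equiv.symm_apply_eq, pairEquiv_false]

@[simp] lemma pairEquiv_symm_hi {k : ℕ} (r : Fin k) : (pairEquiv k).symm (hi r) = (r, true) := by
  rw [Equiv.symm_apply_eq, pairEquiv_true]

lemma lo_or_hi {k : ℕ} (v : Fin (2 * k)) : ∃ r : Fin k, v = lo r ∨ v = hi r := by
  obtain ⟨⟨r, b⟩, rfl⟩ := (pairEquiv k).surjective v
  cases b
  · exact ⟨r, Or.inl (by simp)⟩
  · exact ⟨r, Or.inr (by simp)⟩

lemma lo_injective {k : ℕ} : Function.Injective (lo : Fin k → Fin (2 * k)) := by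
  intro a b h
  simpa [lo, Fin.ext_iff] using h

lemma hi_injective {k : ℕ} : Function.Injective (hi : Fin k → Fin (2 * k)) := by
  intro a b h
  simpa [hi, Fin.ext_iff] using h

lemma lo_ne_hi {k : ℕ} (a b : Fin k) : lo a ≠ hi b := by
  simp only [lo, hi, Ne, Fin.ext_iff]
  omega

lemma prod_pairs {k : ℕ} {R : Type*} [CommMonoid R] (g : Fin (2 * k) → R) :
    ∏ v, g v = ∏ r : Fin k, g (lo r) * g (hi r) := by
  rw [← (pairEquiv k).prod_comp g, Fintype.prod_prod_type]
  refine Finset.prod_congr rfl fun r _ => ?_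
  rw [Fintype.prod_bool, pairEquiv_false, pairEquiv_true, mul_comm]

/-- A function on `Fin (2 * k)` is the same as its restrictions to the `lo` and to the `hi`
points. -/
def splitEquiv (k : ℕ) (α : Type*) :
    (Fin (2 * k) → α) ≃ (Fin k → α) × (Fin k → α) where
  toFun p := (fun r => p (lo r), fun r => p (hi r))
  invFun x v := bif ((pairEquiv k).symm v).2 then x.2 ((pairEquiv k).symm v).1
    else x.1 ((pairEquiv k).symm v).1
  left_inv p := by
    funext v
    obtain ⟨r, rfl | rfl⟩ := lo_or_hi v <;> simp
  right_inv x := by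
    ext r <;> simp

lemma sum_split {k : ℕ} {α R : Type*} [Fintype α] [AddCommMonoid R]
    (F : (Fin k → α) → (Fin k → α) → R) :
    ∑ p : Fin (2 * k) → α, F (fun r => p (lo r)) (fun r => p (hi r)) = ∑ a, ∑ b, F a b := by
  rw [← Fintype.sum_prod_type' (f := F), ← (splitEquiv k α).sum_comp]
  rfl

lemma prod_sum_fun {k : ℕ} {α R : Type*} [Fintype α] [CommSemiring R]
    (F : Fin k → α → R) : ∑ p : Fin k → α, ∏ r, F r (p r) = ∏ r, ∑ a, F r a := by
  rw [Finset.prod_univ_sum, Fintype.piFinset_univ]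

/-- A sum over all sequences of length `2k` of a product of functions of the blocks factors. -/
lemma sum_prod_pairs {k : ℕ} {α R : Type*} [Fintype α] [CommSemiring R]
    (F : Fin k → α → α → R) :
    ∑ p : Fin (2 * k) → α, ∏ r, F r (p (lo r)) (p (hi r)) = ∏ r, ∑ a, ∑ b, F r a b := by
  rw [sum_split (fun a b => ∏ r, F r (a r) (b r))]
  rw [← prod_sum_fun (fun r a => ∑ b, F r a b)]
  exact Finset.sum_congr rfl fun a _ => prod_sum_fun (fun r b => F r (a r) b)

/-- The element of the hyperoctahedral group that permutes the blocks by `π` after acting by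
`x r` inside the block `r`. -/
def hyp {k : ℕ} (π : Equiv.Perm (Fin k)) (x : Fin k → Equiv.Perm Bool) :
    Equiv.Perm (Fin (2 * k)) :=
  (pairEquiv k).permCongr (Equiv.prodCongrLeft (fun _ => π) * Equiv.prodCongrRight x)

lemma hyp_lo {k : ℕ} (π : Equiv.Perm (Fin k)) (x : Fin k → Equiv.Perm Bool) (r : Fin k) :
    hyp π x (lo r) = pairEquiv k (π r, x r false) := by
  simp [hyp, Equiv.permCongr_apply]

lemma hyp_hi {k : ℕ} (π : Equiv.Perm (Fin k)) (x : Fin k → Equiv.Perm Bool) (r : Fin k) :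
    hyp π x (hi r) = pairEquiv k (π r, x r true) := by
  simp [hyp, Equiv.permCongr_apply]

lemma sign_hyp {k : ℕ} (π : Equiv.Perm (Fin k)) (x : Fin k → Equiv.Perm Bool) :
    Equiv.Perm.sign (hyp π x) = ∏ r, Equiv.Perm.sign (x r) := by
  rw [hyp, Equiv.Perm.sign_permCongr, Equiv.Perm.sign_mul, Equiv.Perm.sign_prodCongrLeft,
    Equiv.Perm.sign_prodCongrRight, Fintype.prod_bool, Int.units_mul_self, one_mul]

lemma perm_bool_cases (x : Equiv.Perm Bool) : x = 1 ∨ x = Equiv.swap false true := by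
  revert x; decide

lemma isHyper_hyp {k : ℕ} (π : Equiv.Perm (Fin k)) (x : Fin k → Equiv.Perm Bool) :
    IsHyper (hyp π x) := by
  intro r
  refine ⟨π r, ?_⟩
  rw [hyp_lo, hyp_hi]
  rcases perm_bool_cases (x r) with h | h
  · simp [h]
  · simp [h, Finset.pair_comm]

lemma isHyper_one {k : ℕ} : IsHyper (1 : Equiv.Perm (Fin (2 * k))) := fun i => ⟨i, by simp⟩

/-- The product `∏_r K (p (σ (lo r))) (p (σ (hi r)))` of entries of a matrix `K` along the
matching `σ`; for `K = J` this is `DeltaSp`, for `K = 1` it is `DeltaO`. -/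
def DeltaK {k : ℕ} {α : Type*} (K : Matrix α α ℂ) (σ : Equiv.Perm (Fin (2 * k)))
    (p : Fin (2 * k) → α) : ℂ :=
  ∏ s : Fin k, K (p (σ (lo s))) (p (σ (hi s)))

lemma DeltaK_comp {k : ℕ} {α : Type*} (K : Matrix α α ℂ) (σ π : Equiv.Perm (Fin (2 * k)))
    (p : Fin (2 * k) → α) : DeltaK K σ (fun v => p (π v)) = DeltaK K (π * σ) p := rfl

/-- The character `η` of `{±1}` records whether `K` is symmetric or skew-symmetric. -/
lemma DeltaK_mul_hyp {k : ℕ} {α : Type*} (K : Matrix α α ℂ) (η : ℤˣ →* ℂ)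
    (hK : Kᵀ = η (-1) • K) (σ : Equiv.Perm (Fin (2 * k)))
    (π : Equiv.Perm (Fin k)) (x : Fin k → Equiv.Perm Bool) (p : Fin (2 * k) → α) :
    DeltaK K (σ * hyp π x) p = η (Equiv.Perm.sign (hyp π x)) * DeltaK K σ p := by
  rw [sign_hyp, map_prod, DeltaK, DeltaK,
    ← Equiv.prod_comp π (fun s => K (p (σ (lo s))) (p (σ (hi s)))), ← Finset.prod_mul_distrib]
  refine Finset.prod_congr rfl fun r _ => ?_
  rw [Equiv.Perm.mul_apply, Equiv.Perm.mul_apply, hyp_lo, hyp_hi]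
  rcases perm_bool_cases (x r) with h | h
  · simp [h]
  · have := congrFun (congrFun hK (p (σ (lo (π r))))) (p (σ (hi (π r))))
    rw [Matrix.transpose_apply, Matrix.smul_apply, smul_eq_mul] at this
    simp [h, this]

/-! ### Coset representatives -/

lemma mem_Mset {k : ℕ} {σ : Equiv.Perm (Fin (2 * k))} : σ ∈ Mset k ↔ MProp σ := by
  simp [Mset]

/-- Every coset `σ H_k` meets `M_{2k}`: order each block increasingly, then sort the blocks by
their smaller elements. -/
lemma exists_mul_hyp_mem_Mset {k : ℕ} (σ : Equiv.Perm (Fin (2 * k))) :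
    ∃ (π : Equiv.Perm (Fin k)) (x : Fin k → Equiv.Perm Bool), σ * hyp π x ∈ Mset k := by
  let y : Fin k → Equiv.Perm Bool := fun r =>
    if σ (lo r) < σ (hi r) then 1 else Equiv.swap false true
  let f : Fin k → Fin (2 * k) := fun r => σ (pairEquiv k (r, y r false))
  have hf : Function.Injective f := by
    intro a b h
    have := (pairEquiv k).injective (σ.injective h)
    exact (Prod.mk.inj this).1
  have hlt : ∀ r, f r < σ (pairEquiv k (r, y r true)) := by
    intro r
    by_cases h : σ (lo r) < σ (hi r)
    · simp [f, y, h]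
    · have h' : σ (hi r) < σ (lo r) :=
        lt_of_le_of_ne (not_lt.mp h) fun e => lo_ne_hi r r (σ.injective e).symm
      simpa [f, y, h] using h'
  refine ⟨Tuple.sort f, fun r => y (Tuple.sort f r), mem_Mset.mpr ⟨fun i => ?_, fun i j hij => ?_⟩⟩
  · rw [Equiv.Perm.mul_apply, Equiv.Perm.mul_apply, hyp_lo, hyp_hi]
    exact hlt _
  · rw [Equiv.Perm.mul_apply, Equiv.Perm.mul_apply, hyp_lo, hyp_lo]
    have hmono : StrictMono (f ∘ Tuple.sort f) :=
      (Tuple.monotone_sort f).strictMono_of_injective (hf.comp (Tuple.sort f).injective)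
    exact hmono hij

/-- Distinct elements of `M_{2k}` lie in distinct cosets of `H_k`. -/
lemma eq_of_mem_Mset {k : ℕ} {σ τ : Equiv.Perm (Fin (2 * k))} (hσ : σ ∈ Mset k)
    (hτ : τ ∈ Mset k) (h : IsHyper (σ⁻¹ * τ)) : σ = τ := by
  obtain ⟨hσ1, hσ2⟩ := mem_Mset.mp hσ
  obtain ⟨hτ1, hτ2⟩ := mem_Mset.mp hτ
  have key : ∀ i, ∃ j, τ (lo i) = σ (lo j) ∧ τ (hi i) = σ (hi j) := by
    intro i
    obtain ⟨j, hj⟩ := h i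
    have hs : ({τ (lo i), τ (hi i)} : Finset (Fin (2 * k))) = {σ (lo j), σ (hi j)} := by
      have := congrArg (Finset.image σ) hj
      simpa [Finset.image_insert] using this
    refine ⟨j, ?_⟩
    have h1 : τ (lo i) ∈ ({σ (lo j), σ (hi j)} : Finset (Fin (2 * k))) := by simp [← hs]
    have h2 : τ (hi i) ∈ ({σ (lo j), σ (hi j)} : Finset (Fin (2 * k))) := by simp [← hs]
    have := hσ1 j
    have := hτ1 i
    simp only [Finset.mem_insert, Finset.mem_singleton] at h1 h2
    rcases h1 with h1 | h1 <;> rcases h2 with h2 | h2 <;> rw [h1, h2] at this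
    · exact absurd this (lt_irrefl _)
    · exact ⟨h1, h2⟩
    · exact absurd this (not_lt.mpr (hσ1 j).le)
    · exact absurd this (lt_irrefl _)
  choose j hj using key
  have hσm : StrictMono fun i => σ (lo i) := fun a b hab => hσ2 a b hab
  have hjm : StrictMono j := by
    intro a b hab
    have := hτ2 a b hab
    rw [(hj a).1, (hj b).1] at this
    exact hσm.lt_iff_lt.mp this
  have hid : j = id := by
    refine (hjm.range_inj strictMono_id).mp ?_
    rw [(Finite.surjective_of_injective hjm.injective).range_eq, Set.range_id]
  ext v
  obtain ⟨r, rfl | rfl⟩ := lo_or_hi v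
  · rw [(hj r).1, hid]; rfl
  · rw [(hj r).2, hid]; rfl

/-- A sum over `M_{2k}` of a right `H_k`-invariant function is a sum over the cosets, hence
invariant under left translation of the function. -/
lemma sum_Mset_translate {k : ℕ} (φ : Equiv.Perm (Fin (2 * k)) → ℂ)
    (hφ : ∀ σ π x, φ (σ * hyp π x) = φ σ) (ρ : Equiv.Perm (Fin (2 * k))) :
    ∑ τ ∈ Mset k, φ (ρ * τ) = ∑ τ ∈ Mset k, φ τ := by
  choose π x hM using fun σ : Equiv.Perm (Fin (2 * k)) => exists_mul_hyp_mem_Mset σ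
  have hinv : ∀ ρ τ : Equiv.Perm (Fin (2 * k)), τ ∈ Mset k →
      ρ⁻¹ * (ρ * τ * hyp (π (ρ * τ)) (x (ρ * τ)))
        * hyp (π (ρ⁻¹ * (ρ * τ * hyp (π (ρ * τ)) (x (ρ * τ)))))
          (x (ρ⁻¹ * (ρ * τ * hyp (π (ρ * τ)) (x (ρ * τ))))) = τ := by
    intro ρ τ hτ
    refine (eq_of_mem_Mset hτ (hM _) ?_).symm
    have : ∀ ζ ζ' : Equiv.Perm (Fin (2 * k)), τ⁻¹ * (ρ⁻¹ * (ρ * τ * ζ) * ζ') = ζ * ζ' := by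
      intro ζ ζ'; group
    rw [this]
    intro i
    obtain ⟨j, hj⟩ := isHyper_hyp (π (ρ⁻¹ * (ρ * τ * hyp (π (ρ * τ)) (x (ρ * τ)))))
      (x (ρ⁻¹ * (ρ * τ * hyp (π (ρ * τ)) (x (ρ * τ))))) i
    obtain ⟨l, hl⟩ := isHyper_hyp (π (ρ * τ)) (x (ρ * τ)) j
    refine ⟨l, ?_⟩
    have := congrArg (Finset.image (hyp (π (ρ * τ)) (x (ρ * τ)))) hj
    simp only [Finset.image_insert, Finset.image_singleton] at this
    rw [Equiv.Perm.mul_apply, Equiv.Perm.mul_apply, this, hl]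
  refine Finset.sum_nbij' (fun τ => ρ * τ * hyp (π (ρ * τ)) (x (ρ * τ)))
    (fun τ => ρ⁻¹ * τ * hyp (π (ρ⁻¹ * τ)) (x (ρ⁻¹ * τ)))
    (fun τ _ => hM _) (fun τ _ => hM _) (fun τ hτ => hinv ρ τ hτ) (fun τ hτ => ?_)
    (fun τ _ => (hφ _ _ _).symm)
  simpa using hinv ρ⁻¹ τ hτ

/-! ### Double cosets and Gram pairings -/

/-- The union of two perfect matchings, given as fixed-point-free involutions `b` and `c`, is
bipartite. The dihedral relation `b (b c) b = (b c)⁻¹` shows that `v` and `b v` never lie on a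
common cycle of `b c`; so `b` acts freely on the cycles of `b c`, and a colour is chosen on one
cycle of each pair. -/
lemma exists_coloring {V : Type*} [Finite V] (b c : Equiv.Perm V) (hb : ∀ v, b (b v) = v)
    (hc : ∀ v, c (c v) = v) (hb' : ∀ v, b v ≠ v) (hc' : ∀ v, c v ≠ v) :
    ∃ x : V → Bool, ∀ v, x (b v) = !x v ∧ x (c v) = !x v := by
  have hbb : b * b = 1 := Equiv.ext hb
  have hcc : c * c = 1 := Equiv.ext hc
  have hbi : b⁻¹ = b := inv_eq_of_mul_eq_one_right hbb
  have hci : c⁻¹ = c := inv_eq_of_mul_eq_one_right hcc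
  have hconj : ∀ m : ℤ, b * (b * c) ^ m = (b * c) ^ (-m) * b := by
    intro m
    have h1 : b * (b * c) * b⁻¹ = (b * c)⁻¹ := by
      rw [_root_.mul_inv_rev, hbi, hci, ← mul_assoc, hbb, one_mul]
    have h2 := conj_zpow (a := b) (b := b * c) (i := m)
    rw [h1, _root_.inv_zpow'] at h2
    rw [h2]; group
  have hns : ∀ v, ¬ (b * c).SameCycle v (b v) := by
    rintro v ⟨m, hm⟩
    obtain ⟨l, rfl | rfl⟩ := Int.even_or_odd' m
    · apply hb' (((b * c) ^ l) v)
      rw [← Equiv.Perm.mul_apply, hconj, Equiv.Perm.mul_apply, ← hm, ← Equiv.Perm.mul_apply,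
        ← _root_.zpow_add]
      congr 2; ring
    · apply hc' (((b * c) ^ l) v)
      have h3 : b (((b * c) ^ l) v) = ((b * c) ^ (l + 1)) v := by
        rw [← Equiv.Perm.mul_apply, hconj, Equiv.Perm.mul_apply, ← hm, ← Equiv.Perm.mul_apply,
          ← _root_.zpow_add]
        congr 2; ring
      have h4 : ((b * c) ^ (l + 1)) v = b (c (((b * c) ^ l) v)) := by
        rw [add_comm, _root_.zpow_add, zpow_one, Equiv.Perm.mul_apply, Equiv.Perm.mul_apply]
      exact (b.injective (h3.trans h4)).symm
  let Q := Quotient (Equiv.Perm.SameCycle.setoid (b * c))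
  have : Finite Q := Quotient.finite _
  obtain ⟨N, ⟨φ⟩⟩ := Finite.exists_equiv_fin Q
  let q : V → Fin N := fun v => φ (Quotient.mk _ v)
  have hq : ∀ u v, q u = q v ↔ (b * c).SameCycle u v := by
    intro u v
    simp only [q, EmbeddingLike.apply_eq_iff_eq]
    exact Quotient.eq
  have h1 : ∀ v, q (c v) = q (b v) := by
    intro v
    rw [hq]
    exact ⟨1, by rw [zpow_one, Equiv.Perm.mul_apply, hc]⟩
  have h2 : ∀ v, q (b (c v)) = q v := by
    intro v
    rw [hq]
    exact (Equiv.Perm.SameCycle.refl (b * c) v).apply_left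
  have hne : ∀ v, q v ≠ q (b v) := fun v h => hns v ((hq _ _).mp h)
  refine ⟨fun v => decide (q v < q (b v)), fun v => ⟨?_, ?_⟩⟩
  · have := hne v
    simp only [hb]
    rw [← decide_not, decide_eq_decide, not_lt]
    exact ⟨le_of_lt, fun h => lt_of_le_of_ne h this.symm⟩
  · have := hne v
    simp only [h1, h2]
    rw [← decide_not, decide_eq_decide, not_lt]
    exact ⟨le_of_lt, fun h => lt_of_le_of_ne h this.symm⟩

/-- The permutation fixing every `lo r` and sending `hi r` to `hi (γ r)`. -/
def upper {k : ℕ} (γ : Equiv.Perm (Fin k)) : Equiv.Perm (Fin (2 * k)) :=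
  (pairEquiv k).permCongr (Equiv.prodCongrLeft fun b => if b then γ else 1)

lemma upper_lo {k : ℕ} (γ : Equiv.Perm (Fin k)) (r : Fin k) : upper γ (lo r) = lo r := by
  simp [upper, Equiv.permCongr_apply]

lemma upper_hi {k : ℕ} (γ : Equiv.Perm (Fin k)) (r : Fin k) : upper γ (hi r) = hi (γ r) := by
  simp [upper, Equiv.permCongr_apply]

lemma sign_upper {k : ℕ} (γ : Equiv.Perm (Fin k)) :
    Equiv.Perm.sign (upper γ) = Equiv.Perm.sign γ := by
  rw [upper, Equiv.Perm.sign_permCongr, Equiv.Perm.sign_prodCongrLeft, Fintype.prod_bool]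
  simp

/-- The double coset decomposition `S_{2k} = H_k S_k H_k`, with `S_k` acting on the `hi` points.
A 2-colouring of `Γ(σ)` orients all edges consistently. -/
lemma exists_double_coset {k : ℕ} (σ : Equiv.Perm (Fin (2 * k))) :
    ∃ (y : Fin k → Equiv.Perm Bool) (π : Equiv.Perm (Fin k)) (y' : Fin k → Equiv.Perm Bool)
      (γ : Equiv.Perm (Fin k)), σ * hyp π y' = hyp 1 y * upper γ := by
  let b : Equiv.Perm (Fin (2 * k)) := hyp 1 (fun _ => Equiv.swap false true)
  have hblo : ∀ r, b (lo r) = hi r := fun r => by simp [b, hyp_lo]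
  have hbhi : ∀ r, b (hi r) = lo r := fun r => by simp [b, hyp_hi]
  have hb : ∀ v, b (b v) = v := by
    intro v
    obtain ⟨r, rfl | rfl⟩ := lo_or_hi v <;> simp [hblo, hbhi]
  have hb' : ∀ v, b v ≠ v := by
    intro v
    obtain ⟨r, rfl | rfl⟩ := lo_or_hi v
    · rw [hblo]; exact (lo_ne_hi r r).symm
    · rw [hbhi]; exact lo_ne_hi r r
  obtain ⟨x, hx⟩ := exists_coloring b (σ * b * σ⁻¹) hb (by simp [hb]) hb'
    (fun v h => hb' (σ⁻¹ v) (σ.injective (by simpa using h)))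
  have hx1 : ∀ r, x (hi r) = !x (lo r) := fun r => by rw [← hblo, (hx _).1]
  have hx2 : ∀ r, x (σ (hi r)) = !x (σ (lo r)) := by
    intro r
    have := (hx (σ (lo r))).2
    simpa [hblo] using this
  let y : Fin k → Equiv.Perm Bool := fun r => if x (lo r) then 1 else Equiv.swap false true
  let z : Fin k → Equiv.Perm Bool := fun r => if x (σ (lo r)) then 1 else Equiv.swap false true
  have hylo : ∀ r, x (hyp 1 y (lo r)) = true := by
    intro r
    rw [hyp_lo]
    by_cases h : x (lo r) <;> simp [y, h, hx1]
  have hyhi : ∀ r, x (hyp 1 y (hi r)) = false := by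
    intro r
    rw [hyp_hi]
    by_cases h : x (lo r) <;> simp [y, h, hx1]
  have hzlo : ∀ r, x (σ (pairEquiv k (r, z r false))) = true := by
    intro r
    by_cases h : x (σ (lo r)) <;> simp [z, h, hx2]
  have hzhi : ∀ r, x (σ (pairEquiv k (r, z r true))) = false := by
    intro r
    by_cases h : x (σ (lo r)) <;> simp [z, h, hx2]
  have hA : ∀ v, x v = true → ∃ r, v = hyp 1 y (lo r) := by
    intro v hv
    obtain ⟨u, rfl⟩ := (hyp 1 y).surjective v
    obtain ⟨r, rfl | rfl⟩ := lo_or_hi u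
    · exact ⟨r, rfl⟩
    · rw [hyhi] at hv; cases hv
  have hB : ∀ v, x v = false → ∃ r, v = hyp 1 y (hi r) := by
    intro v hv
    obtain ⟨u, rfl⟩ := (hyp 1 y).surjective v
    obtain ⟨r, rfl | rfl⟩ := lo_or_hi u
    · rw [hylo] at hv; cases hv
    · exact ⟨r, rfl⟩
  choose α hα using fun r => hA _ (hzlo r)
  choose β hβ using fun r => hB _ (hzhi r)
  have hαi : Function.Injective α := by
    intro r s h
    have h1 := hα r
    rw [h, ← hα s] at h1
    exact (Prod.mk.inj ((pairEquiv k).injective (σ.injective h1))).1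
  have hβi : Function.Injective β := by
    intro r s h
    have h1 := hβ r
    rw [h, ← hβ s] at h1
    exact (Prod.mk.inj ((pairEquiv k).injective (σ.injective h1))).1
  let α' := Equiv.ofBijective α (Finite.injective_iff_bijective.mp hαi)
  let β' := Equiv.ofBijective β (Finite.injective_iff_bijective.mp hβi)
  refine ⟨y, α'.symm, fun r => z (α'.symm r), α'.symm.trans β', ?_⟩
  ext v
  congr 1
  obtain ⟨r, rfl | rfl⟩ := lo_or_hi v
  · rw [Equiv.Perm.mul_apply, Equiv.Perm.mul_apply, hyp_lo, upper_lo, hα]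
    congr 2
    exact α'.apply_symm_apply r
  · rw [Equiv.Perm.mul_apply, Equiv.Perm.mul_apply, hyp_hi, upper_hi, hβ]
    rfl

lemma sum_comp_perm {ι α R : Type*} [Fintype ι] [DecidableEq ι] [Fintype α] [AddCommMonoid R]
    (π : Equiv.Perm ι) (F : (ι → α) → R) : ∑ p : ι → α, F (p ∘ π) = ∑ p, F p :=
  (Equiv.arrowCongr π.symm (Equiv.refl α)).sum_comp F

/-- The Gram pairing of two `DeltaK` tensors, one of them standard, evaluated on a
representative of the double coset. -/
lemma gramK_eq {k : ℕ} {α : Type*} [Fintype α] [DecidableEq α] (K : Matrix α α ℂ) (η : ℤˣ →* ℂ)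
    (hK : Kᵀ = η (-1) • K) (hKK : K * Kᵀ = 1) (σ : Equiv.Perm (Fin (2 * k)))
    (y : Fin k → Equiv.Perm Bool) (π : Equiv.Perm (Fin k)) (y' : Fin k → Equiv.Perm Bool)
    (γ : Equiv.Perm (Fin k)) (h : σ * hyp π y' = hyp 1 y * upper γ) :
    ∑ p, DeltaK K 1 p * DeltaK K σ p =
      η (Equiv.Perm.sign (hyp (1 : Equiv.Perm (Fin k)) y) * Equiv.Perm.sign (hyp π y')) *
        ∑ a : Fin k → α, ∏ r, (1 : Matrix α α ℂ) (a (γ r)) (a r) := by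
  have hη : ∀ u : ℤˣ, η u * η u = 1 := fun u => by
    rw [← map_mul, Int.units_mul_self, map_one]
  set e := Equiv.Perm.sign (hyp (1 : Equiv.Perm (Fin k)) y)
  set e' := Equiv.Perm.sign (hyp π y')
  have h1 : ∀ p : Fin (2 * k) → α, DeltaK K 1 p * DeltaK K σ p =
      η (e * e') * (DeltaK K (hyp 1 y) p * DeltaK K (hyp 1 y * upper γ) p) := by
    intro p
    rw [← h, DeltaK_mul_hyp K η hK]
    have := DeltaK_mul_hyp K η hK 1 1 y p
    rw [one_mul] at this
    rw [this, map_mul]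
    linear_combination (-(η e' * η e') * DeltaK K 1 p * DeltaK K σ p) * hη e
      - (DeltaK K 1 p * DeltaK K σ p) * hη e'
  simp_rw [h1, ← Finset.mul_sum]
  congr 1
  have h2 : ∀ p : Fin (2 * k) → α, DeltaK K (hyp 1 y) p * DeltaK K (hyp 1 y * upper γ) p =
      DeltaK K 1 (p ∘ hyp 1 y) * DeltaK K (upper γ) (p ∘ hyp 1 y) := fun p => rfl
  simp_rw [h2]
  rw [sum_comp_perm (hyp 1 y) (fun p => DeltaK K 1 p * DeltaK K (upper γ) p)]
  have h3 : ∀ p : Fin (2 * k) → α, DeltaK K 1 p * DeltaK K (upper γ) p =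
      (fun a b : Fin k → α => ∏ r, K (a (γ r)) (b (γ r)) * K (a r) (b (γ r)))
        (fun r => p (lo r)) (fun r => p (hi r)) := by
    intro p
    simp only [DeltaK, upper_lo, upper_hi, Equiv.Perm.one_apply, Finset.prod_mul_distrib]
    rw [Equiv.prod_comp γ (fun s => K (p (lo s)) (p (hi s)))]
  simp_rw [h3]
  rw [sum_split (fun a b : Fin k → α => ∏ r, K (a (γ r)) (b (γ r)) * K (a r) (b (γ r)))]
  refine Finset.sum_congr rfl fun a _ => ?_
  refine (sum_comp_perm γ (fun b => ∏ r, K (a (γ r)) (b r) * K (a r) (b r))).trans ?_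
  rw [prod_sum_fun (fun r x => K (a (γ r)) x * K (a r) x)]
  refine Finset.prod_congr rfl fun r _ => ?_
  rw [← hKK, Matrix.mul_apply]
  rfl

/-! ### The Gram function of the invariant tensors -/

/-- Sum of the indicator function `F` of the set of functions on `V` that factor through the
surjection `mk : V → Q`. -/
lemma sum_factor {V Q α : Type*} [Fintype V] [DecidableEq V] [Finite Q] [Fintype α] (mk : V → Q)
    (hmk : Function.Surjective mk) (F : (V → α) → ℂ) (P : (V → α) → Prop)
    (h1 : ∀ p, P p → F p = 1) (h0 : ∀ p, ¬ P p → F p = 0)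
    (hP : ∀ p, P p ↔ ∃ q : Q → α, p = q ∘ mk) :
    ∑ p, F p = (Fintype.card α : ℂ) ^ Nat.card Q := by
  classical
  have := Fintype.ofFinite Q
  have e : ∑ q : Q → α, (1 : ℂ) = ∑ p, F p := by
    refine Finset.sum_of_injOn (fun q => q ∘ mk) (hmk.injective_comp_right.injOn)
      (fun _ _ => by simp) (fun p _ hp => h0 p fun hp' => hp ?_) (fun q _ => ?_)
    · obtain ⟨q, rfl⟩ := (hP p).mp hp'
      exact ⟨q, by simp, rfl⟩
    · exact (h1 _ ((hP _).mpr ⟨q, rfl⟩)).symm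
  rw [← e]
  simp [Nat.card_eq_fintype_card]

lemma DeltaK_one_eq_one {k : ℕ} {α : Type*} [DecidableEq α] (σ : Equiv.Perm (Fin (2 * k)))
    (p : Fin (2 * k) → α) (h : ∀ r, p (σ (lo r)) = p (σ (hi r))) :
    DeltaK (1 : Matrix α α ℂ) σ p = 1 :=
  Finset.prod_eq_one fun r _ => by rw [h, Matrix.one_apply_eq]

lemma DeltaK_one_eq_zero {k : ℕ} {α : Type*} [DecidableEq α] (σ : Equiv.Perm (Fin (2 * k)))
    (p : Fin (2 * k) → α) (h : ¬ ∀ r, p (σ (lo r)) = p (σ (hi r))) :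
    DeltaK (1 : Matrix α α ℂ) σ p = 0 := by
  push Not at h
  obtain ⟨r, hr⟩ := h
  exact Finset.prod_eq_zero (Finset.mem_univ r) (Matrix.one_apply_ne hr)

/-- The summand is the indicator of the functions constant on the components of `Γ(σ)`. -/
lemma card_pow_ccount {k : ℕ} {α : Type*} [Fintype α] [DecidableEq α]
    (σ : Equiv.Perm (Fin (2 * k))) :
    ∑ p, DeltaK (1 : Matrix α α ℂ) 1 p * DeltaK (1 : Matrix α α ℂ) σ p =
      (Fintype.card α : ℂ) ^ ccount σ := by
  refine sum_factor (Gamma σ).connectedComponentMk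
    (fun C => C.ind fun v => ⟨v, rfl⟩) _
    (fun p => (∀ r, p (lo r) = p (hi r)) ∧ ∀ r, p (σ (lo r)) = p (σ (hi r))) ?_ ?_ ?_
  · rintro p ⟨h1, h2⟩
    rw [DeltaK_one_eq_one 1 p h1, DeltaK_one_eq_one σ p h2, one_mul]
  · intro p h
    rw [not_and_or] at h
    rcases h with h | h
    · rw [DeltaK_one_eq_zero 1 p h, zero_mul]
    · rw [DeltaK_one_eq_zero σ p h, mul_zero]
  · intro p
    constructor
    · rintro ⟨h1, h2⟩
      have hadj : ∀ u v, (Gamma σ).Adj u v → p u = p v := by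
        intro u v h
        rw [Gamma, SimpleGraph.fromRel_adj] at h
        rcases h.2 with (⟨r, rfl, rfl⟩ | ⟨r, rfl, rfl⟩) | (⟨r, rfl, rfl⟩ | ⟨r, rfl, rfl⟩)
        · exact h1 r
        · exact h2 r
        · exact (h1 r).symm
        · exact (h2 r).symm
      have hwalk : ∀ u v, (Gamma σ).Walk u v → p u = p v := by
        intro u v w
        induction w with
        | nil => rfl
        | cons h _ ih => exact (hadj _ _ h).trans ih
      exact ⟨fun C => C.lift p (fun u v w _ => hwalk u v w), rfl⟩
    · rintro ⟨q, rfl⟩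
      have hadj : ∀ u v, (Gamma σ).Adj u v → (Gamma σ).connectedComponentMk u =
          (Gamma σ).connectedComponentMk v := fun u v h =>
        SimpleGraph.ConnectedComponent.sound h.reachable
      refine ⟨fun r => congrArg q (hadj _ _ ?_), fun r => congrArg q (hadj _ _ ?_)⟩
      · rw [Gamma, SimpleGraph.fromRel_adj]
        exact ⟨lo_ne_hi r r, Or.inl (Or.inl ⟨r, rfl, rfl⟩)⟩
      · rw [Gamma, SimpleGraph.fromRel_adj]
        exact ⟨fun h => lo_ne_hi r r (σ.injective h), Or.inl (Or.inr ⟨r, rfl, rfl⟩)⟩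

/-- The summand is the indicator of the functions constant on the cycles of `γ`. -/
lemma card_pow_orbits {k : ℕ} {α : Type*} [Fintype α] [DecidableEq α] (γ : Equiv.Perm (Fin k)) :
    ∑ a : Fin k → α, ∏ r, (1 : Matrix α α ℂ) (a (γ r)) (a r) =
      (Fintype.card α : ℂ) ^ Nat.card (Quotient (Equiv.Perm.SameCycle.setoid γ)) := by
  refine sum_factor (Quotient.mk (Equiv.Perm.SameCycle.setoid γ)) Quotient.mk_surjective _
    (fun a => ∀ r, a (γ r) = a r) ?_ ?_ ?_
  · intro a h
    exact Finset.prod_eq_one fun r _ => by rw [h, Matrix.one_apply_eq]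
  · intro a h
    push Not at h
    obtain ⟨r, hr⟩ := h
    exact Finset.prod_eq_zero (Finset.mem_univ r) (Matrix.one_apply_ne hr)
  · intro a
    constructor
    · intro h
      refine ⟨Quotient.lift a ?_, rfl⟩
      rintro u v ⟨m, rfl⟩
      have hp : ∀ (j : ℕ) (u : Fin k), a ((γ ^ j) u) = a u := by
        intro j
        induction j with
        | zero => intro u; simp
        | succ j ih => intro u; rw [pow_succ, Equiv.Perm.mul_apply, ih, h]
      obtain ⟨j, rfl | rfl⟩ := m.eq_nat_or_neg
      · rw [zpow_natCast, hp]
      · rw [← hp j ((γ ^ (-(j : ℤ))) u), ← zpow_natCast, ← Equiv.Perm.mul_apply,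
          ← _root_.zpow_add, add_neg_cancel, zpow_zero, Equiv.Perm.one_apply]
    · rintro ⟨q, rfl⟩ r
      exact congrArg q (Quotient.sound (s := Equiv.Perm.SameCycle.setoid γ)
        ((Equiv.Perm.SameCycle.refl γ r).apply_left))

/-- Orbits are the nontrivial cycles together with the fixed points. -/
lemma card_orbits {β : Type*} [Fintype β] [DecidableEq β] (γ : Equiv.Perm β) :
    Nat.card (Quotient (Equiv.Perm.SameCycle.setoid γ)) =
      Multiset.card γ.cycleType + (Fintype.card β - #γ.support) := by
  classical
  let mk : β → Quotient (Equiv.Perm.SameCycle.setoid γ) := Quotient.mk _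
  have hmk : ∀ u v, mk u = mk v ↔ γ.SameCycle u v := fun u v => Quotient.eq
  have huniv : (Finset.univ : Finset (Quotient (Equiv.Perm.SameCycle.setoid γ))) =
      γ.support.image mk ∪ γ.supportᶜ.image mk := by
    rw [← Finset.image_union, Finset.union_compl]
    exact (Finset.image_univ_of_surjective Quotient.mk_surjective).symm
  have hdisj : Disjoint (γ.support.image mk) (γ.supportᶜ.image mk) := by
    rw [Finset.disjoint_left]
    intro q h1 h2
    simp only [Finset.mem_image, Finset.mem_compl] at h1 h2
    obtain ⟨u, hu, rfl⟩ := h1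
    obtain ⟨v, hv, h⟩ := h2
    exact hv (((hmk _ _).mp h).mem_support_iff.mpr hu)
  rw [Nat.card_eq_fintype_card, ← Finset.card_univ, huniv, Finset.card_union_of_disjoint hdisj,
    Equiv.Perm.cycleType_def, Multiset.card_map, ← Finset.card_compl]
  congr 1
  · let F : Quotient (Equiv.Perm.SameCycle.setoid γ) → Equiv.Perm β :=
      Quotient.lift γ.cycleOf fun u v h => Equiv.Perm.SameCycle.cycleOf_eq h
    have himg : γ.cycleFactorsFinset = (γ.support.image mk).image F := by
      rw [Finset.image_image]
      ext c
      rw [Finset.mem_image]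
      constructor
      · intro hc
        obtain ⟨u, hu⟩ := (Equiv.Perm.mem_cycleFactorsFinset_iff.mp hc).1.nonempty_support
        exact ⟨u, Equiv.Perm.mem_cycleFactorsFinset_support_le hc hu,
          ((γ.eq_cycleOf_of_mem_cycleFactorsFinset_iff c hc u).mpr hu).symm⟩
      · rintro ⟨u, hu, rfl⟩
        exact Equiv.Perm.cycleOf_mem_cycleFactorsFinset_iff.mpr hu
    rw [himg]
    refine (Finset.card_image_of_injOn ?_).symm
    intro q hq q' hq' h
    simp only [Finset.coe_image, Set.mem_image, Finset.mem_coe] at hq hq'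
    obtain ⟨u, hu, rfl⟩ := hq
    obtain ⟨v, hv, rfl⟩ := hq'
    exact (hmk _ _).mpr ((Equiv.Perm.sameCycle_iff_cycleOf_eq_of_mem_support hu hv).mpr h)
  · refine Finset.card_image_of_injOn fun u hu v hv h => ?_
    have hu' : γ u = u := by simpa using hu
    exact ((hmk _ _).mp h).eq_of_left hu'

lemma sign_eq_pow_orbits {β : Type*} [Fintype β] [DecidableEq β] (γ : Equiv.Perm β) :
    Equiv.Perm.sign γ =
      (-1) ^ (Fintype.card β + Nat.card (Quotient (Equiv.Perm.SameCycle.setoid γ))) := by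
  have h1 : γ.cycleType.sum = #γ.support := γ.sum_cycleType
  have h2 : #γ.support ≤ Fintype.card β := γ.support.card_le_univ
  rw [Equiv.Perm.sign_of_cycleType, card_orbits, h1]
  have : Fintype.card β + (Multiset.card γ.cycleType + (Fintype.card β - #γ.support)) =
      #γ.support + Multiset.card γ.cycleType + 2 * (Fintype.card β - #γ.support) := by omega
  rw [this, pow_add, pow_add, pow_add, pow_mul]
  simp

lemma Jmat_eq {n : ℕ} (a b : Fin (2 * n)) : Jmat ℂ n a b =
    if (b : ℕ) = (if (a : ℕ) < n then (a : ℕ) + n else (a : ℕ) - n) then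
      (if (a : ℕ) < n then 1 else -1) else 0 := by
  have := a.isLt
  have := b.isLt
  simp only [Jmat, Matrix.of_apply]
  split_ifs <;> first | rfl | omega

lemma Jmat_transpose (n : ℕ) : (Jmat ℂ n)ᵀ = -Jmat ℂ n := by
  ext a b
  have := a.isLt
  have := b.isLt
  simp only [Jmat, Matrix.transpose_apply, Matrix.of_apply, Matrix.neg_apply]
  split_ifs <;> first | omega | simp

lemma Jmat_mul_transpose (n : ℕ) : Jmat ℂ n * (Jmat ℂ n)ᵀ = 1 := by
  ext a b
  have ha := a.isLt
  have hb := b.isLt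
  -- the unique column in which row `a` of `J` does not vanish
  let c : Fin (2 * n) := ⟨if (a : ℕ) < n then (a : ℕ) + n else (a : ℕ) - n, by split_ifs <;> omega⟩
  rw [Matrix.mul_apply, Finset.sum_eq_single c]
  · simp only [Matrix.transpose_apply, Jmat_eq, Matrix.one_apply, Fin.ext_iff, c]
    split_ifs <;> first | omega | simp
  · intro d _ hd
    have : Jmat ℂ n a d = 0 := by
      rw [Jmat_eq, if_neg]
      intro h
      exact hd (Fin.ext h)
    rw [this, zero_mul]
  · simp

lemma Jmat_mul_self (n : ℕ) : Jmat ℂ n * Jmat ℂ n = -1 := by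
  have := Jmat_mul_transpose n
  rw [Jmat_transpose, Matrix.mul_neg] at this
  rw [← this, neg_neg]

/-- The inclusion `{±1} → ℂ` as a monoid homomorphism. -/
def unitSign : ℤˣ →* ℂ := (Int.castRingHom ℂ).toMonoidHom.comp (Units.coeHom ℤ)

lemma unitSign_sign {m : ℕ} (σ : Equiv.Perm (Fin m)) :
    unitSign (Equiv.Perm.sign σ) = sgn ℂ σ := rfl

lemma Jmat_transpose' (n : ℕ) : (Jmat ℂ n)ᵀ = unitSign (-1) • Jmat ℂ n := by
  rw [Jmat_transpose]
  simp [unitSign]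

lemma DeltaSp_mul_hyp {k n : ℕ} (σ : Equiv.Perm (Fin (2 * k))) (π : Equiv.Perm (Fin k))
    (x : Fin k → Equiv.Perm Bool) (p : Fin (2 * k) → Fin (2 * n)) :
    DeltaSp ℂ (σ * hyp π x) p = sgn ℂ (hyp π x) * DeltaSp ℂ σ p :=
  DeltaK_mul_hyp (Jmat ℂ n) unitSign (Jmat_transpose' n) σ π x p

/-- The function `T^{Sp}` is the Gram function of the tensors `Δ'_σ`. -/
lemma gram_one {k n : ℕ} (σ : Equiv.Perm (Fin (2 * k))) :
    ∑ p : Fin (2 * k) → Fin (2 * n), DeltaSp ℂ 1 p * DeltaSp ℂ σ p =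
      (-1 : ℂ) ^ k * sgn ℂ σ * (-(2 * (n : ℂ))) ^ ccount σ := by
  obtain ⟨y, π, y', γ, h⟩ := exists_double_coset σ
  -- counting functions with two values shows that `Γ(σ)` has as many components as `γ` has cycles
  have hc : ccount σ = Nat.card (Quotient (Equiv.Perm.SameCycle.setoid γ)) := by
    have h1 := gramK_eq (1 : Matrix Bool Bool ℂ) 1 (by simp) (by simp) σ y π y' γ h
    rw [card_pow_ccount, card_pow_orbits, MonoidHom.one_apply, one_mul] at h1
    have h2 : 2 ^ ccount σ = 2 ^ Nat.card (Quotient (Equiv.Perm.SameCycle.setoid γ)) := by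
      rw [Fintype.card_bool] at h1
      exact_mod_cast h1
    exact Nat.pow_right_injective le_rfl h2
  have h1 := gramK_eq (Jmat ℂ n) unitSign (Jmat_transpose' n) (Jmat_mul_transpose n) σ y π y' γ h
  rw [card_pow_orbits, ← hc, Fintype.card_fin] at h1
  refine h1.trans ?_
  have hs := congrArg Equiv.Perm.sign h
  rw [Equiv.Perm.sign_mul, Equiv.Perm.sign_mul, sign_upper, sign_eq_pow_orbits γ, ← hc,
    Fintype.card_fin] at hs
  have hs' : Equiv.Perm.sign (hyp (1 : Equiv.Perm (Fin k)) y) * Equiv.Perm.sign (hyp π y') =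
      Equiv.Perm.sign σ * (-1) ^ (k + ccount σ) := by
    have key : ∀ s e e' u : ℤˣ, s * e' = e * u → e * e' = s * u := by decide
    exact key _ _ _ _ hs
  rw [hs', map_mul, unitSign_sign, map_pow]
  have h4 : unitSign (-1) = -1 := by simp [unitSign]
  rw [h4, pow_add, neg_pow (2 * (n : ℂ))]
  push_cast
  ring

/-! ### Moments of symplectic random matrices -/

instance (n : ℕ) : BorelSpace (UG n) := ⟨rfl⟩

lemma continuous_entry {N : ℕ} (a b : Fin N) :
    Continuous fun S : UG N => (S : Matrix (Fin N) (Fin N) ℂ) a b :=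
  (continuous_apply_apply a b).comp continuous_subtype_val

/-- The mixed moments `E[S_{p_1 i_1} ⋯ S_{p_m i_m}]` of the entries of a random matrix. -/
noncomputable def mom {N m : ℕ} (μ : Measure (UG N)) (p i : Fin m → Fin N) : ℂ :=
  ∫ S : UG N, ∏ j, (S : Matrix (Fin N) (Fin N) ℂ) (p j) (i j) ∂μ

lemma integrable_entries {N m : ℕ} (μ : Measure (UG N)) [IsProbabilityMeasure μ]
    (p i : Fin m → Fin N) :
    Integrable (fun S : UG N => ∏ j, (S : Matrix (Fin N) (Fin N) ℂ) (p j) (i j)) μ := by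
  refine Integrable.of_bound (C := 1)
    (continuous_finsetProd _ fun j _ => continuous_entry _ _).aestronglyMeasurable
    (Filter.Eventually.of_forall fun S => ?_)
  rw [norm_prod]
  exact Finset.prod_le_one (fun _ _ => norm_nonneg _)
    fun j _ => entry_norm_bound_of_unitary S.2 _ _

lemma ae_symplectic {n : ℕ} (μ : Measure (UG (2 * n))) [IsProbabilityMeasure μ]
    (hsupp : μ {S : UG (2 * n) | IsSymplectic S} = 1) : ∀ᵐ S ∂μ, IsSymplectic S := by
  have hcl : IsClosed {S : UG (2 * n) | IsSymplectic S} := by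
    refine isClosed_eq ?_ continuous_const
    have h : Continuous fun S : UG (2 * n) => (S : Matrix (Fin (2 * n)) (Fin (2 * n)) ℂ) :=
      continuous_subtype_val
    exact (h.matrix_mul continuous_const).matrix_mul h.matrix_transpose
  exact (mem_ae_iff_prob_eq_one hcl.measurableSet).mpr hsupp

lemma transpose_mul_of_symplectic {n : ℕ} {S : UG (2 * n)} (hS : IsSymplectic S) :
    (S : Matrix (Fin (2 * n)) (Fin (2 * n)) ℂ)ᵀ * Jmat ℂ n
      * (S : Matrix (Fin (2 * n)) (Fin (2 * n)) ℂ) = Jmat ℂ n := by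
  set A : Matrix (Fin (2 * n)) (Fin (2 * n)) ℂ := S.1
  have h0 : A * Jmat ℂ n * Aᵀ = Jmat ℂ n := hS
  have hJ := Jmat_mul_self n
  have h1 : A * (-(Jmat ℂ n * Aᵀ * Jmat ℂ n)) = 1 := by
    rw [Matrix.mul_neg, ← Matrix.mul_assoc, ← Matrix.mul_assoc, h0, hJ, neg_neg]
  have h2 := mul_eq_one_comm.mp h1
  have h3 := congrArg (fun M => Jmat ℂ n * M) h2
  simp only [Matrix.mul_one, Matrix.neg_mul, Matrix.mul_neg, ← Matrix.mul_assoc, hJ] at h3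
  simpa using h3

lemma mom_comp {N m : ℕ} (μ : Measure (UG N)) (π : Equiv.Perm (Fin m)) (p i : Fin m → Fin N) :
    mom μ (p ∘ π) i = mom μ p (i ∘ π.symm) := by
  unfold mom
  congr 1
  ext S
  rw [← Equiv.prod_comp π (fun j => (S : Matrix (Fin N) (Fin N) ℂ) (p j) ((i ∘ π.symm) j))]
  simp

/-- Contracting the first two row indices with `J` removes the first two factors, because
`Sᵀ J S = J`. -/
lemma mom_contract {n m : ℕ} (μ : Measure (UG (2 * n))) [IsProbabilityMeasure μ]
    (hsupp : μ {S : UG (2 * n) | IsSymplectic S} = 1) (r : Fin m → Fin (2 * n))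
    (i : Fin (m + 2) → Fin (2 * n)) :
    ∑ a, ∑ q, Jmat ℂ n a q * mom μ (Fin.cons a (Fin.cons q r) : Fin (m + 2) → Fin (2 * n)) i =
      Jmat ℂ n (i 0) (i 1) * mom μ r (fun j => i j.succ.succ) := by
  unfold mom
  simp_rw [← integral_const_mul]
  have hIntegrable : ∀ a q : Fin (2 * n), Integrable (fun S : UG (2 * n) => Jmat ℂ n a q *
      ∏ j, (S : Matrix (Fin (2 * n)) (Fin (2 * n)) ℂ)
        ((Fin.cons a (Fin.cons q r) : Fin (m + 2) → Fin (2 * n)) j) (i j)) μ :=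
    fun a q => (integrable_entries μ _ _).const_mul _
  simp_rw [← integral_finsetSum _ fun q _ => hIntegrable _ q]
  rw [← integral_finsetSum _ fun a _ => integrable_finsetSum _ fun q _ => hIntegrable a q]
  refine integral_congr_ae ?_
  filter_upwards [ae_symplectic μ hsupp] with S hS
  have h := congrFun (congrFun (transpose_mul_of_symplectic hS) (i 0)) (i 1)
  rw [← h, Matrix.mul_apply]
  simp only [Matrix.mul_apply, Matrix.transpose_apply, Finset.sum_mul]
  rw [Finset.sum_comm]
  refine Finset.sum_congr rfl fun q _ => Finset.sum_congr rfl fun a _ => ?_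
  rw [Fin.prod_univ_succ, Fin.prod_univ_succ]
  have h1 : (Fin.cons a (Fin.cons q r) : Fin (m + 2) → Fin (2 * n)) 1 = q := rfl
  simp only [Fin.cons_zero, Fin.cons_succ, Fin.succ_zero_eq_one, h1]
  ring

/-- Left invariance of the law, expressed on moments. -/
lemma mom_translate {n m : ℕ} (μ : Measure (UG (2 * n))) [IsProbabilityMeasure μ]
    (hμ : ∀ g : UG (2 * n), IsSymplectic g → μ.map (fun x => g * x) = μ)
    (g : UG (2 * n)) (hg : IsSymplectic g) (p i : Fin m → Fin (2 * n)) :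
    ∑ q : Fin m → Fin (2 * n), (∏ j, (g : Matrix (Fin (2 * n)) (Fin (2 * n)) ℂ) (p j) (q j)) *
      mom μ q i = mom μ p i := by
  conv_rhs => rw [mom, ← hμ g hg]
  rw [integral_map (by fun_prop)
    (continuous_finsetProd _ fun j _ => continuous_entry _ _).aestronglyMeasurable]
  unfold mom
  simp_rw [← integral_const_mul]
  rw [← integral_finsetSum _ fun q _ => (integrable_entries μ _ _).const_mul _]
  congr 1
  ext S
  simp only [Submonoid.coe_mul, Matrix.mul_apply]
  rw [← prod_sum_fun]
  simp_rw [Finset.prod_mul_distrib]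

/-! ### Infinitesimal invariance -/

lemma exp_mul_exp_neg {N : ℕ} (X : Matrix (Fin N) (Fin N) ℂ) :
    NormedSpace.exp X * NormedSpace.exp (-X) = 1 := by
  rw [← Matrix.exp_add_of_commute _ _ ((Commute.refl X).neg_right), add_neg_cancel,
    NormedSpace.exp_zero]

lemma exp_mem_unitary {N : ℕ} (X : Matrix (Fin N) (Fin N) ℂ) (hX : Xᴴ = -X) :
    NormedSpace.exp X ∈ Matrix.unitaryGroup (Fin N) ℂ := by
  rw [Matrix.mem_unitaryGroup_iff, Matrix.star_eq_conjTranspose, ← Matrix.exp_conjTranspose, hX]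
  exact exp_mul_exp_neg X

lemma exp_symplectic {n : ℕ} (X : Matrix (Fin (2 * n)) (Fin (2 * n)) ℂ)
    (hX : X * Jmat ℂ n + Jmat ℂ n * Xᵀ = 0) :
    NormedSpace.exp X * Jmat ℂ n * (NormedSpace.exp X)ᵀ = Jmat ℂ n := by
  have hJ := Jmat_mul_self n
  have hinv : (Jmat ℂ n)⁻¹ = -Jmat ℂ n := by
    refine Matrix.inv_eq_right_inv ?_
    rw [Matrix.mul_neg, hJ, neg_neg]
  have hU : IsUnit (Jmat ℂ n) := by
    refine IsUnit.of_mul_eq_one (-Jmat ℂ n) ?_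
    rw [Matrix.mul_neg, hJ, neg_neg]
  have h1 : Jmat ℂ n * Xᵀ * (Jmat ℂ n)⁻¹ = -X := by
    rw [eq_neg_of_add_eq_zero_right hX, hinv, Matrix.neg_mul, Matrix.mul_neg, Matrix.mul_assoc, hJ]
    simp
  have h2 := Matrix.exp_conj (Jmat ℂ n) Xᵀ hU
  rw [h1, hinv, Matrix.exp_transpose] at h2
  have h3 := exp_mul_exp_neg X
  rw [h2] at h3
  have h4 := congrArg (fun M => M * Jmat ℂ n) h3
  simp only [Matrix.mul_neg, Matrix.neg_mul, Matrix.mul_assoc, hJ, neg_neg, Matrix.mul_one,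
    Matrix.one_mul] at h4
  rw [Matrix.mul_assoc]
  exact h4

section Deriv
attribute [local instance] Matrix.linftyOpNormedRing Matrix.linftyOpNormedAlgebra

lemma hasDerivAt_exp_entry {N : ℕ} (X : Matrix (Fin N) (Fin N) ℂ) (a b : Fin N) :
    HasDerivAt (fun t : ℝ => (NormedSpace.exp (t • X)) a b) (X a b) 0 := by
  have h := hasDerivAt_exp_smul_const (𝕂 := ℝ) X (0 : ℝ)
  rw [zero_smul, NormedSpace.exp_zero, one_mul] at h
  have h1 := hasDerivAt_pi.mp h a
  exact hasDerivAt_pi.mp h1 b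
end Deriv

/-- The action of a matrix `X`, as a Lie algebra element, on the tensor `v` (by derivations, one
tensor leg at a time). -/
noncomputable def infAct {n m : ℕ} (v : (Fin m → Fin (2 * n)) → ℂ)
    (X : Matrix (Fin (2 * n)) (Fin (2 * n)) ℂ) (p : Fin m → Fin (2 * n)) : ℂ :=
  ∑ j, ∑ q, X (p j) q * v (Function.update p j q)

/-- The term of the product rule in which only the leg `j` is differentiated. -/
lemma sum_erase_collapse {n m : ℕ} (v : (Fin m → Fin (2 * n)) → ℂ)
    (X : Matrix (Fin (2 * n)) (Fin (2 * n)) ℂ) (p : Fin m → Fin (2 * n)) (j : Fin m) :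
    ∑ q : Fin m → Fin (2 * n), ((∏ l ∈ univ.erase j,
      (1 : Matrix (Fin (2 * n)) (Fin (2 * n)) ℂ) (p l) (q l)) * X (p j) (q j)) * v q =
      ∑ a, X (p j) a * v (Function.update p j a) := by
  symm
  refine Finset.sum_of_injOn (fun a => Function.update p j a)
    (fun a _ b _ h => Function.update_injective p j h) (by simp) ?_ ?_
  · intro q _ hq
    have : ∃ l ∈ univ.erase j, q l ≠ p l := by
      by_contra! hcon
      refine hq ⟨q j, by simp, ?_⟩
      ext l : 1
      by_cases hl : l = j
      · subst hl; simp
      · simp [Function.update_of_ne hl, hcon l (by simpa using hl)]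
    obtain ⟨l, hl, hne⟩ := this
    have h0 : (1 : Matrix (Fin (2 * n)) (Fin (2 * n)) ℂ) (p l) (q l) = 0 :=
      Matrix.one_apply_ne hne.symm
    have h1 : ∏ l ∈ univ.erase j, (1 : Matrix (Fin (2 * n)) (Fin (2 * n)) ℂ) (p l) (q l) = 0 :=
      Finset.prod_eq_zero hl h0
    rw [h1, zero_mul, zero_mul]
  · intro a _
    rw [Finset.prod_eq_one, one_mul, Function.update_self]
    intro l hl
    rw [Function.update_of_ne (Finset.ne_of_mem_erase hl), Matrix.one_apply_eq]

/-- Derivative at `t = 0` of the invariance of the moments under `exp (t X)`. -/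
lemma infAct_eq_zero_of_unitary {n m : ℕ} (μ : Measure (UG (2 * n))) [IsProbabilityMeasure μ]
    (hμ : ∀ g : UG (2 * n), IsSymplectic g → μ.map (fun x => g * x) = μ)
    (X : Matrix (Fin (2 * n)) (Fin (2 * n)) ℂ) (hX : Xᴴ = -X)
    (hXJ : X * Jmat ℂ n + Jmat ℂ n * Xᵀ = 0) (p i : Fin m → Fin (2 * n)) :
    infAct (fun q => mom μ q i) X p = 0 := by
  have hinv : ∀ t : ℝ, ∑ q : Fin m → Fin (2 * n),
      (∏ j, (NormedSpace.exp (t • X)) (p j) (q j)) * mom μ q i = mom μ p i := by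
    intro t
    refine mom_translate μ hμ ⟨NormedSpace.exp (t • X), exp_mem_unitary _ ?_⟩
      (exp_symplectic _ ?_) p i
    · rw [Matrix.conjTranspose_smul, hX]; simp
    · rw [Matrix.transpose_smul, Matrix.smul_mul, Matrix.mul_smul, ← smul_add, hXJ, smul_zero]
  have hd : HasDerivAt (fun t : ℝ => ∑ q : Fin m → Fin (2 * n),
      (∏ j, (NormedSpace.exp (t • X)) (p j) (q j)) * mom μ q i)
      (∑ q : Fin m → Fin (2 * n), (∑ j, (∏ l ∈ univ.erase j,
        (NormedSpace.exp ((0 : ℝ) • X)) (p l) (q l)) • X (p j) (q j)) * mom μ q i) 0 :=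
    HasDerivAt.fun_sum fun q _ =>
      (HasDerivAt.fun_finsetProd fun j _ => hasDerivAt_exp_entry X (p j) (q j)).mul_const _
  have hc : HasDerivAt (fun t : ℝ => ∑ q : Fin m → Fin (2 * n),
      (∏ j, (NormedSpace.exp (t • X)) (p j) (q j)) * mom μ q i) 0 0 := by
    rw [funext hinv]
    exact hasDerivAt_const _ _
  have h := hd.unique hc
  rw [zero_smul, NormedSpace.exp_zero] at h
  simp only [smul_eq_mul, Finset.sum_mul] at h
  rw [Finset.sum_comm] at h
  rw [← h]
  unfold infAct
  refine Finset.sum_congr rfl fun j _ => ?_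
  rw [sum_erase_collapse (fun q => mom μ q i)]

lemma infAct_add {n m : ℕ} (v : (Fin m → Fin (2 * n)) → ℂ)
    (X Y : Matrix (Fin (2 * n)) (Fin (2 * n)) ℂ) (p : Fin m → Fin (2 * n)) :
    infAct v (X + Y) p = infAct v X p + infAct v Y p := by
  simp [infAct, add_mul, Finset.sum_add_distrib]

lemma infAct_smul {n m : ℕ} (v : (Fin m → Fin (2 * n)) → ℂ) (c : ℂ)
    (X : Matrix (Fin (2 * n)) (Fin (2 * n)) ℂ) (p : Fin m → Fin (2 * n)) :
    infAct v (c • X) p = c * infAct v X p := by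
  simp [infAct, Finset.mul_sum, mul_assoc]

lemma Jmat_conjTranspose (n : ℕ) : (Jmat ℂ n)ᴴ = -Jmat ℂ n := by
  rw [← Jmat_transpose]
  ext a b
  simp only [Matrix.conjTranspose_apply, Matrix.transpose_apply, Jmat, Matrix.of_apply]
  split_ifs <;> simp

/-- The moments are annihilated by the complexified Lie algebra `sp(2n, ℂ)`: every element is
`A + iB` with `A`, `B` in the Lie algebra of the compact group. -/
lemma infAct_eq_zero {n m : ℕ} (μ : Measure (UG (2 * n))) [IsProbabilityMeasure μ]
    (hμ : ∀ g : UG (2 * n), IsSymplectic g → μ.map (fun x => g * x) = μ)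
    (X : Matrix (Fin (2 * n)) (Fin (2 * n)) ℂ)
    (hXJ : X * Jmat ℂ n + Jmat ℂ n * Xᵀ = 0) (p i : Fin m → Fin (2 * n)) :
    infAct (fun q => mom μ q i) X p = 0 := by
  have hH : Xᴴ * Jmat ℂ n + Jmat ℂ n * Xᴴᵀ = 0 := by
    have hJ := Jmat_mul_self n
    have h1 := congrArg Matrix.conjTranspose hXJ
    rw [Matrix.conjTranspose_add, Matrix.conjTranspose_mul, Matrix.conjTranspose_mul,
      Jmat_conjTranspose, Matrix.conjTranspose_zero] at h1
    have h2 : Xᵀᴴ = Xᴴᵀ := by ext; simp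
    rw [h2] at h1
    have e1 : Jmat ℂ n * (-Jmat ℂ n * Xᴴ) * Jmat ℂ n = Xᴴ * Jmat ℂ n := by
      rw [Matrix.neg_mul, Matrix.mul_neg, ← Matrix.mul_assoc, hJ]; simp
    have e2 : Jmat ℂ n * (Xᴴᵀ * -Jmat ℂ n) * Jmat ℂ n = Jmat ℂ n * Xᴴᵀ := by
      rw [Matrix.mul_neg, Matrix.mul_neg, Matrix.neg_mul, Matrix.mul_assoc, Matrix.mul_assoc,
        hJ]
      simp
    rw [← e1, ← e2, ← Matrix.add_mul, ← Matrix.mul_add, h1]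
    simp
  have hA := infAct_eq_zero_of_unitary μ hμ (X - Xᴴ) (by simp) (by
    rw [Matrix.sub_mul, Matrix.transpose_sub, Matrix.mul_sub, ← sub_eq_zero.mpr (hXJ.trans hH.symm)]
    abel) p i
  have hB := infAct_eq_zero_of_unitary μ hμ (Complex.I • (X + Xᴴ)) (by
      rw [Matrix.conjTranspose_smul, Matrix.conjTranspose_add, Matrix.conjTranspose_conjTranspose,
        add_comm, ← smul_neg]; simp [add_comm]) (by
    rw [Matrix.transpose_smul, Matrix.smul_mul, Matrix.mul_smul, ← smul_add, Matrix.add_mul,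
      Matrix.transpose_add, Matrix.mul_add, add_add_add_comm, hXJ, hH]; simp) p i
  have hX : X = (1 / 2 : ℂ) • (X - Xᴴ) + (-Complex.I / 2) • (Complex.I • (X + Xᴴ)) := by
    rw [smul_smul]
    have : -Complex.I / 2 * Complex.I = 1 / 2 := by
      rw [div_mul_eq_mul_div, neg_mul, Complex.I_mul_I, neg_neg]
    rw [this, ← smul_add, sub_add_add_cancel, ← two_smul ℂ X, smul_smul]
    norm_num
  rw [hX, infAct_add, infAct_smul, infAct_smul, hA, hB]
  simp

/-! ### The Casimir recursion -/

/-- The projection of the matrix unit `E_{a c}` to `sp(2n, ℂ)`, up to a factor `2`: its `(p, q)`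
entry is `δ_{p a} δ_{q c} - J_{c p} J_{a q}`. -/
noncomputable def spElem {n : ℕ} (a c : Fin (2 * n)) : Matrix (Fin (2 * n)) (Fin (2 * n)) ℂ :=
  Matrix.of fun p q => (if p = a then if q = c then 1 else 0 else 0)
    - Jmat ℂ n c p * Jmat ℂ n a q

lemma Jmat_mul_self_apply {n : ℕ} (a b : Fin (2 * n)) :
    ∑ q, Jmat ℂ n a q * Jmat ℂ n q b = -(if a = b then 1 else 0) := by
  have h := congrFun (congrFun (Jmat_mul_self n) a) b
  rw [Matrix.mul_apply] at h
  rw [h, Matrix.neg_apply, Matrix.one_apply]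

lemma Jmat_antisymm {n : ℕ} (a b : Fin (2 * n)) : Jmat ℂ n a b = -Jmat ℂ n b a := by
  have h := congrFun (congrFun (Jmat_transpose n) b) a
  exact h

lemma spElem_mem {n : ℕ} (a c : Fin (2 * n)) :
    spElem a c * Jmat ℂ n + Jmat ℂ n * (spElem a c)ᵀ = 0 := by
  have h1 : ∀ p s, (spElem a c * Jmat ℂ n) p s =
      (if p = a then Jmat ℂ n c s else 0) + (if s = a then Jmat ℂ n c p else 0) := by
    intro p s
    rw [Matrix.mul_apply]
    simp only [spElem, Matrix.of_apply, sub_mul, Finset.sum_sub_distrib, mul_assoc]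
    rw [← Finset.mul_sum, Jmat_mul_self_apply]
    simp only [ite_mul, one_mul, zero_mul, eq_comm (a := a) (b := s)]
    by_cases hp : p = a <;> by_cases hs : s = a <;> simp [hp, hs]
  have h2 : Jmat ℂ n * (spElem a c)ᵀ = -(spElem a c * Jmat ℂ n)ᵀ := by
    rw [Matrix.transpose_mul, Jmat_transpose, Matrix.neg_mul, neg_neg]
  rw [h2]
  ext p s
  rw [Matrix.add_apply, Matrix.neg_apply, Matrix.transpose_apply, h1, h1, Matrix.zero_apply]
  ring

/-- The Casimir identity: on leg `0` the term `E_{a c}` of `spElem` acts by the scalar `2n` and its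
`J`-adjoint by `1`; on every other leg they give a swap and a `J`-contraction. -/
lemma casimir {n m : ℕ} (v : (Fin (m + 1) → Fin (2 * n)) → ℂ)
    (hv : ∀ X : Matrix (Fin (2 * n)) (Fin (2 * n)) ℂ,
      X * Jmat ℂ n + Jmat ℂ n * Xᵀ = 0 → ∀ p, infAct v X p = 0)
    (p : Fin (m + 1) → Fin (2 * n)) :
    (2 * n + 1) * v p + ∑ j : Fin m, v (p ∘ Equiv.swap 0 j.succ) =
      ∑ j : Fin m, Jmat ℂ n (p 0) (p j.succ) * ∑ a, ∑ q, Jmat ℂ n a q *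
        v (Function.update (Function.update p 0 a) j.succ q) := by
  have h : ∑ a, infAct v (spElem a (p 0)) (Function.update p 0 a) = 0 :=
    Finset.sum_eq_zero fun a _ => hv _ (spElem_mem a (p 0)) _
  unfold infAct at h
  simp only [Fin.sum_univ_succ, Finset.sum_add_distrib, Function.update_self,
    Function.update_idem] at h
  have h0 : ∑ a, ∑ q, spElem a (p 0) a q * v (Function.update p 0 q) = (2 * n + 1) * v p := by
    simp only [spElem, Matrix.of_apply, sub_mul, Finset.sum_sub_distrib, if_true]
    have e1 : ∑ _a : Fin (2 * n), ∑ q, (if q = p 0 then (1 : ℂ) else 0) *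
        v (Function.update p 0 q) = 2 * n * v p := by
      simp
    have e2 : ∑ a, ∑ q, Jmat ℂ n (p 0) a * Jmat ℂ n a q * v (Function.update p 0 q) = -v p := by
      rw [Finset.sum_comm]
      simp only [← Finset.sum_mul, Jmat_mul_self_apply]
      simp
    rw [e1, e2]
    ring
  have hj : ∀ j : Fin m, ∑ a, ∑ q, spElem a (p 0) (Function.update p 0 a j.succ) q *
      v (Function.update (Function.update p 0 a) j.succ q) =
      v (p ∘ Equiv.swap 0 j.succ) - Jmat ℂ n (p 0) (p j.succ) * ∑ a, ∑ q, Jmat ℂ n a q *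
        v (Function.update (Function.update p 0 a) j.succ q) := by
    intro j
    simp only [Function.update_of_ne (Fin.succ_ne_zero j)]
    simp only [spElem, Matrix.of_apply, sub_mul, Finset.sum_sub_distrib]
    congr 1
    · have : p ∘ Equiv.swap 0 j.succ =
          Function.update (Function.update p 0 (p j.succ)) j.succ (p 0) := by
        ext x : 1
        by_cases hx : x = j.succ
        · subst hx; simp
        · by_cases hx0 : x = 0
          · subst hx0; simp [Function.update_of_ne hx]
          · simp [Function.update_of_ne hx, Function.update_of_ne hx0,
              Equiv.swap_apply_of_ne_of_ne hx0 hx]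
      rw [this]
      simp
    · simp only [Finset.mul_sum, mul_assoc]
  rw [h0, Finset.sum_comm] at h
  simp only [hj, Finset.sum_sub_distrib] at h
  linear_combination h

lemma update_update_eq {n m : ℕ} (p : Fin (m + 2) → Fin (2 * n)) (j : Fin (m + 1))
    (a q : Fin (2 * n)) :
    Function.update (Function.update p 0 a) j.succ q =
      (Fin.cons a (Fin.cons q fun l : Fin m => p (Equiv.swap 1 j.succ l.succ.succ)) :
        Fin (m + 2) → Fin (2 * n)) ∘ Equiv.swap 1 j.succ := by
  have h0 : Equiv.swap 1 j.succ 0 = 0 :=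
    Equiv.swap_apply_of_ne_of_ne (by simp) (Fin.succ_ne_zero j).symm
  have h : Function.update (Function.update p 0 a) j.succ q ∘ Equiv.swap 1 j.succ =
      (Fin.cons a (Fin.cons q fun l : Fin m => p (Equiv.swap 1 j.succ l.succ.succ)) :
        Fin (m + 2) → Fin (2 * n)) := by
    ext x : 1
    refine Fin.cases ?_ (fun y => ?_) x
    · rw [Function.comp_apply, h0, Function.update_of_ne (Fin.succ_ne_zero j).symm]
      simp
    · refine Fin.cases ?_ (fun l => ?_) y
      · have : (Fin.succ 0 : Fin (m + 2)) = 1 := rfl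
        rw [Function.comp_apply, this, Equiv.swap_apply_left, Function.update_self]
        rfl
      · have h1 : Equiv.swap 1 j.succ l.succ.succ ≠ j.succ := by
          intro hh
          have := (Equiv.swap (1 : Fin (m + 2)) j.succ).injective
            (hh.trans (Equiv.swap_apply_left 1 j.succ).symm)
          exact absurd (Fin.succ_injective _ this) (Fin.succ_ne_zero l)
        have h2 : Equiv.swap 1 j.succ l.succ.succ ≠ 0 := by
          intro hh
          exact absurd ((Equiv.swap (1 : Fin (m + 2)) j.succ).injective (hh.trans h0.symm))
            (Fin.succ_ne_zero _)
        rw [Function.comp_apply, Function.update_of_ne h1, Function.update_of_ne h2]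
        rfl
  rw [← h]
  ext x : 1
  simp

/-- The Casimir identity for the moments, whose `J`-contractions are moments with two factors
fewer. -/
lemma mom_rec {n m : ℕ} (μ : Measure (UG (2 * n))) [IsProbabilityMeasure μ]
    (hsupp : μ {S : UG (2 * n) | IsSymplectic S} = 1)
    (hμ : ∀ g : UG (2 * n), IsSymplectic g → μ.map (fun x => g * x) = μ)
    (p i : Fin (m + 2) → Fin (2 * n)) :
    (2 * n + 1) * mom μ p i + ∑ j : Fin (m + 1), mom μ (p ∘ Equiv.swap 0 j.succ) i =
      ∑ j : Fin (m + 1), Jmat ℂ n (p 0) (p j.succ) * (Jmat ℂ n (i 0) (i j.succ) *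
        mom μ (fun l : Fin m => p (Equiv.swap 1 j.succ l.succ.succ))
          (fun l : Fin m => i (Equiv.swap 1 j.succ l.succ.succ))) := by
  rw [casimir (fun q => mom μ q i) (fun X hX p => infAct_eq_zero μ hμ X hX p i) p]
  refine Finset.sum_congr rfl fun j _ => ?_
  congr 1
  simp only [update_update_eq, mom_comp, Equiv.symm_swap]
  rw [mom_contract μ hsupp]
  have h0 : Equiv.swap 1 j.succ 0 = 0 :=
    Equiv.swap_apply_of_ne_of_ne (by simp) (Fin.succ_ne_zero j).symm
  simp only [Function.comp_apply, h0, Equiv.swap_apply_left]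

/-! ### The moments as invariant tensors -/

/-- The span of the invariant tensors `Δ'_σ`, `σ ∈ S_{2k}`. -/
noncomputable def invSpan (k n : ℕ) : Submodule ℂ ((Fin (2 * k) → Fin (2 * n)) → ℂ) :=
  Submodule.span ℂ (Set.range fun σ : Equiv.Perm (Fin (2 * k)) => DeltaSp ℂ σ)

lemma DeltaSp_comp {k n : ℕ} (σ π : Equiv.Perm (Fin (2 * k))) (p : Fin (2 * k) → Fin (2 * n)) :
    DeltaSp ℂ σ (p ∘ π) = DeltaSp ℂ (π * σ) p := rfl

lemma invSpan_comp {k n : ℕ} (π : Equiv.Perm (Fin (2 * k)))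
    {u : (Fin (2 * k) → Fin (2 * n)) → ℂ} (hu : u ∈ invSpan k n) :
    (fun p => u (p ∘ π)) ∈ invSpan k n := by
  have h : (invSpan k n).map (LinearMap.funLeft ℂ ℂ fun p : Fin (2 * k) → Fin (2 * n) => p ∘ π) ≤
      invSpan k n := by
    rw [invSpan, Submodule.map_span_le]
    rintro _ ⟨σ, rfl⟩
    exact Submodule.subset_span ⟨π * σ, rfl⟩
  exact h ⟨u, hu, rfl⟩

/-- The extension of `σ ∈ S_{2k}` to `2k + 2` points fixing the first two. -/
def extPerm {k : ℕ} (σ : Equiv.Perm (Fin (2 * k))) : Equiv.Perm (Fin (2 * (k + 1))) :=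
  (Equiv.Perm.decomposeFin.symm (0, Equiv.Perm.decomposeFin.symm (0, σ)) :
    Equiv.Perm (Fin (2 * k + 1 + 1)))

lemma extPerm_zero {k : ℕ} (σ : Equiv.Perm (Fin (2 * k))) :
    extPerm σ (0 : Fin (2 * k + 1 + 1)) = (0 : Fin (2 * k + 1 + 1)) := by
  unfold extPerm
  exact Equiv.Perm.decomposeFin_symm_apply_zero _ _

lemma extPerm_succ {k : ℕ} (σ : Equiv.Perm (Fin (2 * k))) (x : Fin (2 * k + 1)) :
    extPerm σ (x.succ : Fin (2 * k + 1 + 1)) =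
      ((Equiv.Perm.decomposeFin.symm (0, σ) x).succ : Fin (2 * k + 1 + 1)) := by
  have h := Equiv.Perm.decomposeFin_symm_apply_succ (Equiv.Perm.decomposeFin.symm (0, σ)) 0 x
  rw [Equiv.swap_self] at h
  exact h

lemma extPerm_one {k : ℕ} (σ : Equiv.Perm (Fin (2 * k))) :
    extPerm σ (1 : Fin (2 * k + 1 + 1)) = (1 : Fin (2 * k + 1 + 1)) := by
  have h := extPerm_succ σ 0
  rw [Equiv.Perm.decomposeFin_symm_apply_zero] at h
  exact h

lemma extPerm_succ_succ {k : ℕ} (σ : Equiv.Perm (Fin (2 * k))) (x : Fin (2 * k)) :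
    extPerm σ (x.succ.succ : Fin (2 * k + 1 + 1)) = ((σ x).succ.succ : Fin (2 * k + 1 + 1)) := by
  have h := Equiv.Perm.decomposeFin_symm_apply_succ σ 0 x
  rw [Equiv.swap_self] at h
  rw [extPerm_succ, h]
  rfl

lemma DeltaSp_extPerm {k n : ℕ} (σ : Equiv.Perm (Fin (2 * k)))
    (p : Fin (2 * k + 1 + 1) → Fin (2 * n)) :
    DeltaSp ℂ (k := k + 1) (extPerm σ) p =
      Jmat ℂ n (p 0) (p 1) * DeltaSp ℂ σ (fun l => p l.succ.succ) := by
  unfold DeltaSp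
  rw [Fin.prod_univ_succ]
  refine congrArg₂ (· * ·) ?_ ?_
  · exact congrArg₂ (fun a b => Jmat ℂ n (p a) (p b)) (extPerm_zero σ) (extPerm_one σ)
  · refine Finset.prod_congr rfl fun s _ => ?_
    exact congrArg₂ (fun a b => Jmat ℂ n (p a) (p b)) (extPerm_succ_succ σ (lo s))
      (extPerm_succ_succ σ (hi s))

lemma invSpan_extend {k n : ℕ} {u : (Fin (2 * k) → Fin (2 * n)) → ℂ} (hu : u ∈ invSpan k n) :
    (fun p : Fin (2 * k + 1 + 1) → Fin (2 * n) =>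
      Jmat ℂ n (p 0) (p 1) * u (fun l => p l.succ.succ)) ∈ invSpan (k + 1) n := by
  induction hu using Submodule.span_induction with
  | mem x hx =>
    obtain ⟨σ, rfl⟩ := hx
    have h : (fun p : Fin (2 * k + 1 + 1) → Fin (2 * n) =>
      Jmat ℂ n (p 0) (p 1) * DeltaSp ℂ σ (fun l => p l.succ.succ)) =
        DeltaSp ℂ (k := k + 1) (extPerm σ) := funext fun p => (DeltaSp_extPerm σ p).symm
    rw [h]
    exact Submodule.subset_span ⟨_, rfl⟩
  | zero =>
    simp only [Pi.zero_apply, mul_zero]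
    exact Submodule.zero_mem _
  | add x y _ _ hx hy =>
    simp only [Pi.add_apply, mul_add]
    exact Submodule.add_mem _ hx hy
  | smul c x _ hx =>
    simp only [Pi.smul_apply, smul_eq_mul, mul_left_comm _ c]
    exact Submodule.smul_mem _ c hx

/-- The left-hand side of the Casimir identity as a linear operator on tensors. -/
noncomputable def casOp (n m : ℕ) : ((Fin (m + 1) → Fin (2 * n)) → ℂ) →ₗ[ℂ]
    ((Fin (m + 1) → Fin (2 * n)) → ℂ) :=
  (2 * n + 1 : ℂ) • LinearMap.id + ∑ j : Fin m,
    LinearMap.funLeft ℂ ℂ fun p : Fin (m + 1) → Fin (2 * n) => p ∘ Equiv.swap 0 j.succ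

lemma casOp_apply {n m : ℕ} (v : (Fin (m + 1) → Fin (2 * n)) → ℂ)
    (p : Fin (m + 1) → Fin (2 * n)) :
    casOp n m v p = (2 * n + 1) * v p + ∑ j : Fin m, v (p ∘ Equiv.swap 0 j.succ) := by
  simp [casOp, LinearMap.funLeft]

/-- The diagonal term of `casOp` dominates because there are fewer than `2n + 1` swaps. -/
lemma casOp_injective {n m : ℕ} (hm : m < 2 * n + 1) : Function.Injective (casOp n m) := by
  rw [injective_iff_map_eq_zero]
  intro v hv
  ext p
  have : Nonempty (Fin (m + 1) → Fin (2 * n)) := ⟨p⟩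
  obtain ⟨p₀, hp₀⟩ := Finite.exists_max fun p => ‖v p‖
  have h := congrFun hv p₀
  rw [casOp_apply, Pi.zero_apply] at h
  have h1 : ‖((2 * n + 1 : ℕ) : ℂ) * v p₀‖ ≤ m * ‖v p₀‖ := by
    have : ((2 * n + 1 : ℕ) : ℂ) * v p₀ = -∑ j : Fin m, v (p₀ ∘ Equiv.swap 0 j.succ) := by
      push_cast
      linear_combination h
    rw [this, norm_neg]
    refine (norm_sum_le _ _).trans ((Finset.sum_le_card_nsmul _ _ _ fun j _ => hp₀ _).trans ?_)
    simp
  rw [norm_mul, Complex.norm_natCast] at h1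
  have h2 : (m : ℝ) < (2 * n + 1 : ℕ) := by exact_mod_cast hm
  have h3 : ‖v p₀‖ = 0 := by
    by_contra hne
    have : 0 < ‖v p₀‖ := lt_of_le_of_ne (norm_nonneg _) (Ne.symm hne)
    exact absurd h1 (not_le.mpr (mul_lt_mul_of_pos_right h2 this))
  have h4 : ‖v p‖ ≤ 0 := (hp₀ p).trans h3.le
  simpa using h4

/-- An injective operator preserving a finite-dimensional subspace `U` reflects membership
in `U`. -/
lemma mem_of_map_mem {E : Type*} [AddCommGroup E] [Module ℂ E] (U : Submodule ℂ E)
    [FiniteDimensional ℂ U] (f : E →ₗ[ℂ] E) (hf : Function.Injective f)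
    (hU : ∀ u ∈ U, f u ∈ U) {v : E} (hv : f v ∈ U) : v ∈ U := by
  have hinj : Function.Injective (f.restrict hU) := fun a b hab =>
    Subtype.ext (hf (congrArg Subtype.val hab))
  obtain ⟨w, hw⟩ := LinearMap.injective_iff_surjective.mp hinj ⟨f v, hv⟩
  have := hf (congrArg Subtype.val hw : f w.1 = f v)
  exact this ▸ w.2

/-- First fundamental theorem for moments of order `2k ≤ 2n`. -/
lemma mom_mem_invSpan {n : ℕ} (μ : Measure (UG (2 * n))) [IsProbabilityMeasure μ]
    (hsupp : μ {S : UG (2 * n) | IsSymplectic S} = 1)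
    (hμ : ∀ g : UG (2 * n), IsSymplectic g → μ.map (fun x => g * x) = μ) (k : ℕ) (hk : k ≤ n) :
    ∀ i : Fin (2 * k) → Fin (2 * n), (fun p => mom μ p i) ∈ invSpan k n := by
  induction k with
  | zero =>
    intro i
    refine Submodule.subset_span ⟨1, ?_⟩
    ext p
    simp [mom, DeltaSp]
  | succ k ih =>
    intro i
    have ihk := ih (by omega)
    refine mem_of_map_mem (invSpan (k + 1) n) (casOp n (2 * k + 1)) (casOp_injective (by omega))
      ?_ ?_
    · intro u hu
      have : casOp n (2 * k + 1) u = (2 * n + 1 : ℂ) • u +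
          ∑ j : Fin (2 * k + 1), fun p : Fin (2 * k + 1 + 1) → Fin (2 * n) =>
            u (p ∘ Equiv.swap 0 j.succ) := by
        ext p
        rw [casOp_apply]
        simp
      rw [this]
      exact Submodule.add_mem _ (Submodule.smul_mem _ _ hu)
        (Submodule.sum_mem _ fun j _ => invSpan_comp (k := k + 1) (Equiv.swap 0 j.succ) hu)
    · have : casOp n (2 * k + 1) (fun p => mom μ p i) = ∑ j : Fin (2 * k + 1),
          Jmat ℂ n (i (0 : Fin (2 * k + 1 + 1))) (i j.succ) •
            (fun p : Fin (2 * k + 1 + 1) → Fin (2 * n) =>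
              (fun p : Fin (2 * k + 1 + 1) → Fin (2 * n) => Jmat ℂ n (p 0) (p 1) *
                (fun r => mom μ r fun l : Fin (2 * k) =>
                  i (Equiv.swap (1 : Fin (2 * k + 1 + 1)) j.succ l.succ.succ))
                (fun l => p l.succ.succ)) (p ∘ Equiv.swap 1 j.succ)) := by
        ext p
        rw [casOp_apply, mom_rec μ hsupp hμ p i, Finset.sum_apply]
        refine Finset.sum_congr rfl fun j _ => ?_
        have h0 : Equiv.swap 1 j.succ 0 = 0 :=
          Equiv.swap_apply_of_ne_of_ne (by simp) (Fin.succ_ne_zero j).symm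
        simp only [Pi.smul_apply, smul_eq_mul, Function.comp_apply, h0, Equiv.swap_apply_left]
        ring
      refine (congrArg (· ∈ invSpan (k + 1) n) this).mpr ?_
      exact Submodule.sum_mem _ fun j _ => Submodule.smul_mem _ _
        (invSpan_comp (k := k + 1) (Equiv.swap 1 j.succ) (invSpan_extend (ihk _)))

/-! ### The Weingarten formula and the moments of `W̃` -/

lemma prod_quad {N k : ℕ} (B S : Matrix (Fin N) (Fin N) ℂ) (i : Fin (2 * k) → Fin N) :
    ∏ s : Fin k, (Sᵀ * B * S) (i (lo s)) (i (hi s)) =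
      ∑ p : Fin (2 * k) → Fin N, (∏ r : Fin k, B (p (lo r)) (p (hi r))) *
        ∏ j, S (p j) (i j) := by
  have h : ∀ p : Fin (2 * k) → Fin N, (∏ r : Fin k, B (p (lo r)) (p (hi r))) *
      ∏ j, S (p j) (i j) = ∏ r : Fin k, (fun (r : Fin k) (a b : Fin N) =>
        B a b * (S a (i (lo r)) * S b (i (hi r)))) r (p (lo r)) (p (hi r)) := by
    intro p
    rw [prod_pairs, ← Finset.prod_mul_distrib]
  have h' := sum_prod_pairs (k := k) fun (r : Fin k) (a b : Fin N) =>
    B a b * (S a (i (lo r)) * S b (i (hi r)))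
  refine Eq.trans ?_ ((Finset.sum_congr rfl fun p _ => h p).trans h').symm
  refine Finset.prod_congr rfl fun r _ => ?_
  simp only [Matrix.mul_apply, Matrix.transpose_apply, Finset.sum_mul]
  rw [Finset.sum_comm]
  refine Finset.sum_congr rfl fun a _ => Finset.sum_congr rfl fun b _ => ?_
  ring

/-- Moments of the entries of `Sᵀ B S` as contractions of the moments of `S`. -/
lemma integral_quad {N k : ℕ} (μ : Measure (UG N)) [IsProbabilityMeasure μ]
    (B : Matrix (Fin N) (Fin N) ℂ) (i : Fin (2 * k) → Fin N) :
    ∫ S : UG N, ∏ s : Fin k, ((S : Matrix (Fin N) (Fin N) ℂ)ᵀ * B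
      * (S : Matrix (Fin N) (Fin N) ℂ)) (i (lo s)) (i (hi s)) ∂μ =
      ∑ p : Fin (2 * k) → Fin N, (∏ r : Fin k, B (p (lo r)) (p (hi r))) * mom μ p i := by
  simp_rw [prod_quad]
  rw [integral_finsetSum _ fun p _ => (integrable_entries μ _ _).const_mul _]
  simp_rw [integral_const_mul]
  rfl

/-- Contracting the row indices of the moments with `Δ'_ρ` gives `Δ'_ρ` of the column indices. -/
lemma mom_contract_Delta {n k : ℕ} (μ : Measure (UG (2 * n))) [IsProbabilityMeasure μ]
    (hsupp : μ {S : UG (2 * n) | IsSymplectic S} = 1) (ρ : Equiv.Perm (Fin (2 * k)))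
    (i : Fin (2 * k) → Fin (2 * n)) :
    ∑ p : Fin (2 * k) → Fin (2 * n), DeltaSp ℂ ρ p * mom μ p i = DeltaSp ℂ ρ i := by
  have h1 : ∀ i : Fin (2 * k) → Fin (2 * n),
      ∑ p : Fin (2 * k) → Fin (2 * n), DeltaSp ℂ 1 p * mom μ p i = DeltaSp ℂ 1 i := by
    intro i
    have h := integral_quad μ (Jmat ℂ n) i
    have h' : ∫ S : UG (2 * n), ∏ s : Fin k, ((S : Matrix (Fin (2 * n)) (Fin (2 * n)) ℂ)ᵀ
        * Jmat ℂ n * (S : Matrix (Fin (2 * n)) (Fin (2 * n)) ℂ)) (i (lo s)) (i (hi s)) ∂μ =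
        ∫ _S : UG (2 * n), DeltaSp ℂ 1 i ∂μ := by
      refine integral_congr_ae ?_
      filter_upwards [ae_symplectic μ hsupp] with S hS
      rw [transpose_mul_of_symplectic hS]
      rfl
    rw [h', integral_const] at h
    simp only [probReal_univ, one_smul] at h
    exact h.symm
  have h2 := sum_comp_perm ρ fun p : Fin (2 * k) → Fin (2 * n) =>
    DeltaSp ℂ 1 p * mom μ (p ∘ ⇑(ρ⁻¹)) i
  have h3 : ∀ p : Fin (2 * k) → Fin (2 * n), (p ∘ ⇑ρ) ∘ ⇑(ρ⁻¹) = p := by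
    intro p; ext x : 1; simp
  simp only [h3, DeltaSp_comp, mul_one, mom_comp] at h2
  rw [h2]
  exact h1 (i ∘ ρ)

lemma sgn_mul_self {m : ℕ} (σ : Equiv.Perm (Fin m)) : sgn ℂ σ * sgn ℂ σ = 1 := by
  unfold sgn
  rcases Int.units_eq_one_or (Equiv.Perm.sign σ) with h | h <;> simp [h]

/-- The function `T^{Sp}(·; n)`. -/
noncomputable def TSp (n k : ℕ) (σ : Equiv.Perm (Fin (2 * k))) : ℂ :=
  (-1 : ℂ) ^ k * sgn ℂ σ * (-(2 * (n : ℂ))) ^ ccount σ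

lemma gram {k n : ℕ} (ρ τ : Equiv.Perm (Fin (2 * k))) :
    ∑ p : Fin (2 * k) → Fin (2 * n), DeltaSp ℂ ρ p * DeltaSp ℂ τ p = TSp n k (ρ⁻¹ * τ) := by
  have h := sum_comp_perm ρ fun p : Fin (2 * k) → Fin (2 * n) =>
    DeltaSp ℂ 1 p * DeltaSp ℂ (ρ⁻¹ * τ) p
  simp only [DeltaSp_comp, mul_one, mul_inv_cancel_left] at h
  rw [TSp, ← gram_one, h]

lemma TSp_mul_hyp {k n : ℕ} (σ : Equiv.Perm (Fin (2 * k))) (π : Equiv.Perm (Fin k))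
    (x : Fin k → Equiv.Perm Bool) :
    TSp n k (σ * hyp π x) = sgn ℂ (hyp π x) * TSp n k σ := by
  have h1 := gram (n := n) 1 (σ * hyp π x)
  have h2 := gram (n := n) 1 σ
  simp only [inv_one, one_mul] at h1 h2
  rw [← h1, ← h2, Finset.mul_sum]
  refine Finset.sum_congr rfl fun p _ => ?_
  rw [DeltaSp_mul_hyp]
  ring

lemma exists_coeff {k n : ℕ} {u : (Fin (2 * k) → Fin (2 * n)) → ℂ} (hu : u ∈ invSpan k n) :
    ∃ c : Equiv.Perm (Fin (2 * k)) → ℂ, ∀ p, u p = ∑ τ ∈ Mset k, c τ * DeltaSp ℂ τ p := by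
  induction hu using Submodule.span_induction with
  | mem x hx =>
    obtain ⟨σ, rfl⟩ := hx
    obtain ⟨π, y, h⟩ := exists_mul_hyp_mem_Mset σ
    refine ⟨fun τ => if τ = σ * hyp π y then sgn ℂ (hyp π y) else 0, fun p => ?_⟩
    simp only [ite_mul, zero_mul]
    rw [Finset.sum_ite_eq' (Mset k), if_pos h, DeltaSp_mul_hyp, ← mul_assoc, sgn_mul_self, one_mul]
  | zero => exact ⟨0, fun p => by simp⟩
  | add x y _ _ hx hy =>
    obtain ⟨c, hc⟩ := hx
    obtain ⟨d, hd⟩ := hy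
    exact ⟨c + d, fun p => by simp [hc, hd, add_mul, Finset.sum_add_distrib]⟩
  | smul a x _ hx =>
    obtain ⟨c, hc⟩ := hx
    exact ⟨a • c, fun p => by simp [hc, Finset.mul_sum, mul_assoc]⟩

/-- `Wg^{Sp}` inverts the Gram matrix of the `Δ'_σ`, `σ ∈ M_{2k}`. -/
lemma gram_mul_Wg {n k : ℕ} (WgSp : Equiv.Perm (Fin (2 * k)) → ℂ)
    (hbi : ∀ (σ ζ ζ' : Equiv.Perm (Fin (2 * k))), IsHyper ζ → IsHyper ζ' →
      WgSp (ζ * σ * ζ') = sgn ℂ ζ * sgn ℂ ζ' * WgSp σ)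
    (hWg : sconv (TSp n k) WgSp = oneHeps) (ρ σ : Equiv.Perm (Fin (2 * k)))
    (hρ : ρ ∈ Mset k) (hσ : σ ∈ Mset k) :
    ∑ τ ∈ Mset k, TSp n k (ρ⁻¹ * τ) * WgSp (τ⁻¹ * σ) = if ρ = σ then 1 else 0 := by
  have h1 := sum_Mset_translate (fun τ => TSp n k τ * WgSp (τ⁻¹ * (ρ⁻¹ * σ))) (by
    intro τ π x
    have h2 := hbi ((τ * hyp π x)⁻¹ * (ρ⁻¹ * σ)) (hyp π x) 1 (isHyper_hyp π x) isHyper_one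
    have h3 : hyp π x * ((τ * hyp π x)⁻¹ * (ρ⁻¹ * σ)) * 1 = τ⁻¹ * (ρ⁻¹ * σ) := by group
    have h4 : sgn ℂ (1 : Equiv.Perm (Fin (2 * k))) = 1 := by simp [sgn]
    rw [h3, h4, mul_one] at h2
    rw [h2, TSp_mul_hyp]
    ring) ρ⁻¹
  have h5 : ∀ τ : Equiv.Perm (Fin (2 * k)), (ρ⁻¹ * τ)⁻¹ * (ρ⁻¹ * σ) = τ⁻¹ * σ := by
    intro τ; group
  simp only [h5] at h1
  rw [h1]
  have h6 := congrFun hWg (ρ⁻¹ * σ)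
  unfold sconv at h6
  rw [h6, oneHeps]
  by_cases h : ρ = σ
  · subst h
    rw [inv_mul_cancel, if_pos isHyper_one, if_pos rfl]
    simp [sgn]
  · rw [if_neg h, if_neg]
    exact fun hh => h (eq_of_mem_Mset hρ hσ hh)

/-- The Weingarten formula for the compact symplectic group. -/
lemma mom_eq {n k : ℕ} (hnk : k ≤ n) (μ : Measure (UG (2 * n))) [IsProbabilityMeasure μ]
    (hsupp : μ {S : UG (2 * n) | IsSymplectic S} = 1)
    (hμ : ∀ g : UG (2 * n), IsSymplectic g → μ.map (fun x => g * x) = μ)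
    (WgSp : Equiv.Perm (Fin (2 * k)) → ℂ)
    (hbi : ∀ (σ ζ ζ' : Equiv.Perm (Fin (2 * k))), IsHyper ζ → IsHyper ζ' →
      WgSp (ζ * σ * ζ') = sgn ℂ ζ * sgn ℂ ζ' * WgSp σ)
    (hWg : sconv (TSp n k) WgSp = oneHeps) (p i : Fin (2 * k) → Fin (2 * n)) :
    mom μ p i = ∑ τ ∈ Mset k, (∑ ρ ∈ Mset k, WgSp (τ⁻¹ * ρ) * DeltaSp ℂ ρ i) *
      DeltaSp ℂ τ p := by
  obtain ⟨c, hc⟩ := exists_coeff (mom_mem_invSpan μ hsupp hμ k hnk i)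
  let A : Matrix (Mset k) (Mset k) ℂ := Matrix.of fun ρ τ => TSp n k (ρ.1⁻¹ * τ.1)
  let B : Matrix (Mset k) (Mset k) ℂ := Matrix.of fun τ σ => WgSp (τ.1⁻¹ * σ.1)
  have hAB : A * B = 1 := by
    ext ρ σ
    rw [Matrix.mul_apply, Matrix.one_apply]
    have h := gram_mul_Wg WgSp hbi hWg ρ.1 σ.1 ρ.2 σ.2
    rw [← Finset.sum_coe_sort] at h
    simp only [A, B, Matrix.of_apply, Subtype.ext_iff]
    exact h
  have hBA := mul_eq_one_comm.mp hAB
  have hA : A *ᵥ (fun τ => c τ.1) = fun ρ => DeltaSp ℂ ρ.1 i := by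
    ext ρ
    rw [← mom_contract_Delta μ hsupp ρ.1 i]
    simp only [hc, Finset.mul_sum]
    rw [Finset.sum_comm, ← Finset.sum_coe_sort]
    simp only [Matrix.mulVec, dotProduct, A, Matrix.of_apply, ← gram, Finset.sum_mul]
    refine Finset.sum_congr rfl fun τ _ => Finset.sum_congr rfl fun q _ => ?_
    ring
  have hcB : (fun τ : Mset k => c τ.1) = B *ᵥ (fun ρ => DeltaSp ℂ ρ.1 i) := by
    rw [← hA, Matrix.mulVec_mulVec, hBA, Matrix.one_mulVec]
  rw [hc]
  refine Finset.sum_congr rfl fun τ hτ => ?_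
  have := congrFun hcB ⟨τ, hτ⟩
  simp only [Matrix.mulVec, dotProduct, B, Matrix.of_apply] at this
  rw [this, Finset.sum_coe_sort (Mset k) fun ρ => WgSp (τ⁻¹ * ρ) * DeltaSp ℂ ρ i]

lemma Iab_mul_Jmat (n : ℕ) : Iab ℂ (2 * n) n * Jmat ℂ n = -(Jmat ℂ n * Iab ℂ (2 * n) n) := by
  have hI : Iab ℂ (2 * n) n = Matrix.diagonal fun p : Fin (2 * n) =>
      if (p : ℕ) < n then 1 else -1 := by
    ext p q
    simp only [Iab, Matrix.of_apply, Matrix.diagonal_apply]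
  rw [hI]
  ext p q
  rw [Matrix.neg_apply, Matrix.diagonal_mul, Matrix.mul_diagonal]
  have hp := p.2
  have hq := q.2
  simp only [Jmat, Matrix.of_apply]
  split_ifs <;> first | omega | norm_num

lemma Jmat_mem_unitary (n : ℕ) : Jmat ℂ n ∈ Matrix.unitaryGroup (Fin (2 * n)) ℂ := by
  rw [Matrix.mem_unitaryGroup_iff, Matrix.star_eq_conjTranspose, Jmat_conjTranspose,
    ← Jmat_transpose, Jmat_mul_transpose]

/-- Translating by `J` changes the sign of `Sᵀ J I' S`, so odd moments vanish. -/
lemma integral_odd {n k : ℕ} (hk : Odd k) (μ : Measure (UG (2 * n))) [IsProbabilityMeasure μ]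
    (hμ : ∀ g : UG (2 * n), IsSymplectic g → μ.map (fun x => g * x) = μ)
    (i : Fin (2 * k) → Fin (2 * n)) :
    ∫ S : UG (2 * n), ∏ s : Fin k,
          ((S : Matrix (Fin (2 * n)) (Fin (2 * n)) ℂ)ᵀ * (Jmat ℂ n * Iab ℂ (2 * n) n)
            * (S : Matrix (Fin (2 * n)) (Fin (2 * n)) ℂ)) (i (lo s)) (i (hi s)) ∂μ = 0 := by
  let g : UG (2 * n) := ⟨Jmat ℂ n, Jmat_mem_unitary n⟩
  have hg : IsSymplectic g := by
    change Jmat ℂ n * Jmat ℂ n * (Jmat ℂ n)ᵀ = Jmat ℂ n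
    rw [Matrix.mul_assoc, Jmat_mul_transpose, Matrix.mul_one]
  have hcont : Continuous fun S : UG (2 * n) => ∏ s : Fin k,
      ((S : Matrix (Fin (2 * n)) (Fin (2 * n)) ℂ)ᵀ * (Jmat ℂ n * Iab ℂ (2 * n) n)
        * (S : Matrix (Fin (2 * n)) (Fin (2 * n)) ℂ)) (i (lo s)) (i (hi s)) := by
    have h : Continuous fun S : UG (2 * n) => (S : Matrix (Fin (2 * n)) (Fin (2 * n)) ℂ) :=
      continuous_subtype_val
    exact continuous_finsetProd _ fun s _ =>
      ((h.matrix_transpose.matrix_mul continuous_const).matrix_mul h).matrix_elem _ _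
  have hJ : (Jmat ℂ n)ᵀ * (Jmat ℂ n * Iab ℂ (2 * n) n) * Jmat ℂ n =
      -(Jmat ℂ n * Iab ℂ (2 * n) n) := by
    rw [← Matrix.mul_assoc, mul_eq_one_comm.mp (Jmat_mul_transpose n), Matrix.one_mul,
      Iab_mul_Jmat]
  have hself : ∫ S : UG (2 * n), ∏ s : Fin k,
          ((S : Matrix (Fin (2 * n)) (Fin (2 * n)) ℂ)ᵀ * (Jmat ℂ n * Iab ℂ (2 * n) n)
            * (S : Matrix (Fin (2 * n)) (Fin (2 * n)) ℂ)) (i (lo s)) (i (hi s)) ∂μ =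
      -∫ S : UG (2 * n), ∏ s : Fin k,
          ((S : Matrix (Fin (2 * n)) (Fin (2 * n)) ℂ)ᵀ * (Jmat ℂ n * Iab ℂ (2 * n) n)
            * (S : Matrix (Fin (2 * n)) (Fin (2 * n)) ℂ)) (i (lo s)) (i (hi s)) ∂μ := by
    conv_lhs => rw [← hμ g hg]
    rw [integral_map (by fun_prop) hcont.aestronglyMeasurable, ← integral_neg]
    congr 1
    ext S
    have h : ((g * S : UG (2 * n)) : Matrix (Fin (2 * n)) (Fin (2 * n)) ℂ)ᵀ
        * (Jmat ℂ n * Iab ℂ (2 * n) n)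
        * ((g * S : UG (2 * n)) : Matrix (Fin (2 * n)) (Fin (2 * n)) ℂ) =
        -((S : Matrix (Fin (2 * n)) (Fin (2 * n)) ℂ)ᵀ * (Jmat ℂ n * Iab ℂ (2 * n) n)
            * (S : Matrix (Fin (2 * n)) (Fin (2 * n)) ℂ)) := by
      have hgS : ((g * S : UG (2 * n)) : Matrix (Fin (2 * n)) (Fin (2 * n)) ℂ) =
        Jmat ℂ n * (S : Matrix (Fin (2 * n)) (Fin (2 * n)) ℂ) := rfl
      rw [hgS, Matrix.transpose_mul, Matrix.mul_assoc _ (Jmat ℂ n)ᵀ, ← Matrix.mul_assoc _ (Jmat ℂ n),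
        Matrix.mul_assoc _ _ (Jmat ℂ n), hJ, Matrix.mul_neg, Matrix.neg_mul]
    rw [h]
    simp only [Matrix.neg_apply]
    rw [Finset.prod_neg, Finset.card_univ, Fintype.card_fin, hk.neg_one_pow, neg_one_mul]
  exact self_eq_neg.mp hself

lemma integral_even {n k : ℕ} (hnk : k ≤ n) (μ : Measure (UG (2 * n))) [IsProbabilityMeasure μ]
    (hsupp : μ {S : UG (2 * n) | IsSymplectic S} = 1)
    (hμ : ∀ g : UG (2 * n), IsSymplectic g → μ.map (fun x => g * x) = μ)
    (WgSp : Equiv.Perm (Fin (2 * k)) → ℂ)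
    (hbi : ∀ (σ ζ ζ' : Equiv.Perm (Fin (2 * k))), IsHyper ζ → IsHyper ζ' →
      WgSp (ζ * σ * ζ') = sgn ℂ ζ * sgn ℂ ζ' * WgSp σ)
    (hWg : sconv (TSp n k) WgSp = oneHeps) (i : Fin (2 * k) → Fin (2 * n)) :
    ∫ S : UG (2 * n), ∏ s : Fin k,
          ((S : Matrix (Fin (2 * n)) (Fin (2 * n)) ℂ)ᵀ * (Jmat ℂ n * Iab ℂ (2 * n) n)
            * (S : Matrix (Fin (2 * n)) (Fin (2 * n)) ℂ)) (i (lo s)) (i (hi s)) ∂μ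
        = ∑ σ ∈ Mset k, DeltaSp ℂ σ i * sconv (TCI n k) WgSp σ := by
  rw [integral_quad]
  have h1 : ∀ τ : Equiv.Perm (Fin (2 * k)), ∑ p : Fin (2 * k) → Fin (2 * n),
      (∏ r : Fin k, (Jmat ℂ n * Iab ℂ (2 * n) n) (p (lo r)) (p (hi r))) *
        ((∑ ρ ∈ Mset k, WgSp (τ⁻¹ * ρ) * DeltaSp ℂ ρ i) * DeltaSp ℂ τ p) =
      ∑ ρ ∈ Mset k, DeltaSp ℂ ρ i * (TCI n k τ * WgSp (τ⁻¹ * ρ)) := by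
    intro τ
    calc _ = (∑ ρ ∈ Mset k, WgSp (τ⁻¹ * ρ) * DeltaSp ℂ ρ i) * TCI n k τ := by
          rw [TCI, Finset.mul_sum]
          exact Finset.sum_congr rfl fun p _ => by ring
      _ = _ := by
          rw [Finset.sum_mul]
          exact Finset.sum_congr rfl fun ρ _ => by ring
  simp only [mom_eq hnk μ hsupp hμ WgSp hbi hWg]
  simp_rw [Finset.mul_sum (Mset k)]
  rw [Finset.sum_comm]
  simp_rw [h1, sconv, Finset.mul_sum]
  exact Finset.sum_comm

/-- Weingarten calculus for class C I, Theorem 5.2: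
`W̃ = Sᵀ J I'_{nn} S`. -/
theorem stmt16 (n k : ℕ) (hk : 0 < k) (hnk : k ≤ n)
    (μ : Measure (UG (2 * n))) [IsProbabilityMeasure μ]
    (hsupp : μ {S : UG (2 * n) | IsSymplectic S} = 1)
    (hμ : ∀ g : UG (2 * n), IsSymplectic g → μ.map (fun x => g * x) = μ)
    (WgSp : Equiv.Perm (Fin (2 * k)) → ℂ)
    (hbi : ∀ (σ ζ ζ' : Equiv.Perm (Fin (2 * k))), IsHyper ζ → IsHyper ζ' →
      WgSp (ζ * σ * ζ') = sgn ℂ ζ * sgn ℂ ζ' * WgSp σ)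
    (hWg : sconv (fun σ => (-1 : ℂ) ^ k * sgn ℂ σ * (-(2 * (n : ℂ))) ^ ccount σ) WgSp
      = oneHeps) :
    (Even k → ∀ i : Fin (2 * k) → Fin (2 * n),
      ∫ S : UG (2 * n), ∏ s : Fin k,
          ((S : Matrix (Fin (2 * n)) (Fin (2 * n)) ℂ)ᵀ * (Jmat ℂ n * Iab ℂ (2 * n) n)
            * (S : Matrix (Fin (2 * n)) (Fin (2 * n)) ℂ)) (i (lo s)) (i (hi s)) ∂μ
        = ∑ σ ∈ Mset k, DeltaSp ℂ σ i * sconv (TCI n k) WgSp σ) ∧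
    (Odd k → ∀ i : Fin (2 * k) → Fin (2 * n),
      ∫ S : UG (2 * n), ∏ s : Fin k,
          ((S : Matrix (Fin (2 * n)) (Fin (2 * n)) ℂ)ᵀ * (Jmat ℂ n * Iab ℂ (2 * n) n)
            * (S : Matrix (Fin (2 * n)) (Fin (2 * n)) ℂ)) (i (lo s)) (i (hi s)) ∂μ
        = 0) := by
  have hWg' : sconv (TSp n k) WgSp = oneHeps := hWg
  exact ⟨fun _ i => integral_even hnk μ hsupp hμ WgSp hbi hWg' i,
    fun hodd i => integral_odd hodd μ hμ i⟩

end WgPaper
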